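/- arXiv:1209.4972 — 2 statements merged into one kernel-verified Lean document; each statement's English description precedes it below -/
import Mathlib

section
/- The binomial edge ideal J_G is a complete intersection ideal if and only if every connected component of G is a path graph. -/
open MvPolynomial

noncomputable section

/-- The binomial edge ideal of a simple graph `G` on vertex type `V`, inside the
polynomial ring `K[x_i, y_i : i ∈ V]`, modelled as `MvPolynomial (V ⊕ V) K`
with `x_i = X (Sum.inl i)` and `y_i = X (Sum.inr i)`. -/
def binomialEdgeIdeal (K : Type*) [Field K] {V : Type*} (G : SimpleGraph V) :
    Ideal (MvPolynomial (V ⊕ V) K) :=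
  Ideal.span { f | ∃ i j : V, G.Adj i j ∧
    f = X (Sum.inl i) * X (Sum.inr j) - X (Sum.inl j) * X (Sum.inr i) }

/-- The minimal number of generators of an ideal. -/
def mu {R : Type*} [CommRing R] (J : Ideal R) : ℕ :=
  sInf {k | ∃ s : Finset R, s.card = k ∧ Ideal.span (s : Set R) = J}

/-- The height of an ideal: the infimum of the heights of the primes containing it. -/
def htI {R : Type*} [CommRing R] (I : Ideal R) : ℕ∞ :=
  ⨅ (P : PrimeSpectrum R) (_ : I ≤ P.asIdeal), Order.height P

/-- An ideal is unmixed if all of its minimal primes have height equal to its height. -/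
def IsUnmixed {R : Type*} [CommRing R] (I : Ideal R) : Prop :=
  ∀ P ∈ I.minimalPrimes, htI P = htI I

/-- The depth of a ring `R` with respect to an ideal `m`: the supremum of the
lengths of regular sequences on `R` consisting of elements of `m`. -/
def ringDepth (R : Type*) [CommRing R] (m : Ideal R) : ℕ∞ :=
  sSup {d : ℕ∞ | ∃ l : List R, (l.length : ℕ∞) = d ∧ (∀ x ∈ l, x ∈ m) ∧
    RingTheory.Sequence.IsRegular R l}

/-- The graded maximal ideal of the quotient of a polynomial ring by an ideal `J`:
the image of the ideal generated by all the variables. -/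
def gradedMaxQuot {K σ : Type*} [Field K] (J : Ideal (MvPolynomial σ K)) :
    Ideal (MvPolynomial σ K ⧸ J) :=
  (Ideal.span (Set.range (X : σ → MvPolynomial σ K))).map (Ideal.Quotient.mk J)

/-- `S/J` is Cohen–Macaulay: its depth with respect to the graded maximal ideal
equals its Krull dimension. -/
def IsCMQuot {K σ : Type*} [Field K] (J : Ideal (MvPolynomial σ K)) : Prop :=
  (ringDepth (MvPolynomial σ K ⧸ J) (gradedMaxQuot J) : WithBot ℕ∞) =
    ringKrullDim (MvPolynomial σ K ⧸ J)

/-- A graph is a path graph if its vertices can be ordered `v_1, …, v_m` so that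
its edges are exactly `{v_i, v_{i+1}}` for `1 ≤ i ≤ m - 1`. -/
def IsPathGraph {V : Type*} (H : SimpleGraph V) : Prop :=
  ∃ (m : ℕ) (e : V ≃ Fin m), ∀ a b : V,
    H.Adj a b ↔ ((e a : ℕ) + 1 = (e b : ℕ) ∨ (e b : ℕ) + 1 = (e a : ℕ))

/-- The vertex set of a connected component, as a set of vertices. -/
def compSupp {V : Type*} (G : SimpleGraph V) (c : G.ConnectedComponent) : Set V :=
  {v | G.connectedComponentMk v = c}

end

noncomputable section

/-- The binomial `x_i y_j - x_j y_i` attached to a pair of vertices. -/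
def edgeBinomial (K : Type*) [Field K] {V : Type*} (i j : V) : MvPolynomial (V ⊕ V) K :=
  X (Sum.inl i) * X (Sum.inr j) - X (Sum.inl j) * X (Sum.inr i)

theorem edgeBinomial_swap (K : Type*) [Field K] {V : Type*} (i j : V) :
    edgeBinomial K j i = -edgeBinomial K i j := by
  simp only [edgeBinomial]
  ring

theorem edgeBinomial_mem_binomialEdgeIdeal {K : Type*} [Field K] {V : Type*} {G : SimpleGraph V}
    {i j : V} (h : G.Adj i j) : edgeBinomial K i j ∈ binomialEdgeIdeal K G :=
  Ideal.subset_span ⟨i, j, h, rfl⟩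

theorem binomialEdgeIdeal_le_iff {K : Type*} [Field K] {V : Type*} {G : SimpleGraph V}
    {I : Ideal (MvPolynomial (V ⊕ V) K)} :
    binomialEdgeIdeal K G ≤ I ↔ ∀ i j, G.Adj i j → edgeBinomial K i j ∈ I := by
  rw [binomialEdgeIdeal, Ideal.span_le]
  exact ⟨fun h i j hij => h ⟨i, j, hij, rfl⟩, by rintro h _ ⟨i, j, hij, rfl⟩; exact h i j hij⟩

open Classical in
/-- The edges of `G`, each listed once as an increasing pair. -/
def orderedEdges {V : Type*} [Fintype V] [LinearOrder V] (G : SimpleGraph V) : Finset (V × V) :=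
  Finset.univ.filter fun e => e.1 < e.2 ∧ G.Adj e.1 e.2

theorem mem_orderedEdges {V : Type*} [Fintype V] [LinearOrder V] {G : SimpleGraph V}
    {e : V × V} : e ∈ orderedEdges G ↔ e.1 < e.2 ∧ G.Adj e.1 e.2 := by
  simp [orderedEdges]

theorem binomialEdgeIdeal_le_of_orderedEdges {K : Type*} [Field K] {V : Type*} [Fintype V]
    [LinearOrder V] {G : SimpleGraph V} {I : Ideal (MvPolynomial (V ⊕ V) K)}
    (h : ∀ e ∈ orderedEdges G, edgeBinomial K e.1 e.2 ∈ I) : binomialEdgeIdeal K G ≤ I := by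
  refine binomialEdgeIdeal_le_iff.2 fun i j hij => ?_
  rcases lt_or_gt_of_ne hij.ne with hlt | hlt
  · exact h (i, j) (mem_orderedEdges.2 ⟨hlt, hij⟩)
  · rw [edgeBinomial_swap]
    exact neg_mem (h (j, i) (mem_orderedEdges.2 ⟨hlt, hij.symm⟩))

theorem span_image_orderedEdges (K : Type*) [Field K] {V : Type*} [Fintype V] [LinearOrder V]
    (G : SimpleGraph V) :
    Ideal.span ((fun e : V × V => edgeBinomial K e.1 e.2) '' orderedEdges G) =
      binomialEdgeIdeal K G := by
  apply le_antisymm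
  · rw [Ideal.span_le]
    rintro _ ⟨e, he, rfl⟩
    exact edgeBinomial_mem_binomialEdgeIdeal (mem_orderedEdges.1 he).2
  · exact binomialEdgeIdeal_le_of_orderedEdges fun e he => Ideal.subset_span ⟨e, he, rfl⟩

theorem exists_span_eq_card_eq_mu (K : Type*) [Field K] {V : Type*} [Finite V]
    (G : SimpleGraph V) :
    ∃ s : Finset (MvPolynomial (V ⊕ V) K), s.card = mu (binomialEdgeIdeal K G) ∧
      Ideal.span (s : Set _) = binomialEdgeIdeal K G := by
  obtain ⟨s, hs⟩ := IsNoetherian.noetherian (binomialEdgeIdeal K G)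
  exact Nat.sInf_mem (s := {k | ∃ s : Finset _, s.card = k ∧
    Ideal.span (s : Set _) = binomialEdgeIdeal K G}) ⟨s.card, s, rfl, hs⟩

theorem single_add_single_le_iff {V : Type*} {i j k l : V} :
    (Finsupp.single (Sum.inl k) 1 + Finsupp.single (Sum.inr l) 1 : V ⊕ V →₀ ℕ) ≤
      Finsupp.single (Sum.inl i) 1 + Finsupp.single (Sum.inr j) 1 ↔ k = i ∧ l = j := by
  classical
  constructor
  · intro h
    have h1 := h (Sum.inl k)
    have h2 := h (Sum.inr l)
    simp only [Finsupp.add_apply, Finsupp.single_apply, Sum.inl.injEq, Sum.inr.injEq] at h1 h2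
    grind
  · rintro ⟨rfl, rfl⟩
    exact le_rfl

theorem coeff_mul_edgeBinomial {K : Type*} [Field K] {V : Type*} [LinearOrder V]
    (b : MvPolynomial (V ⊕ V) K) {i j k l : V} (hij : i < j) (hkl : k < l) :
    coeff (Finsupp.single (Sum.inl i) 1 + Finsupp.single (Sum.inr j) 1) (b * edgeBinomial K k l) =
      if k = i ∧ l = j then constantCoeff b else 0 := by
  classical
  have hmon : ∀ a c : V, (X (Sum.inl a) * X (Sum.inr c) : MvPolynomial (V ⊕ V) K) =
      monomial (Finsupp.single (Sum.inl a) 1 + Finsupp.single (Sum.inr c) 1) 1 := by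
    intro a c
    rw [X, X, monomial_mul, one_mul]
  rw [edgeBinomial, mul_sub, coeff_sub, hmon, hmon, coeff_mul_monomial', coeff_mul_monomial']
  simp only [single_add_single_le_iff]
  have hne : ¬(l = i ∧ k = j) := by
    rintro ⟨rfl, rfl⟩
    exact lt_asymm hij hkl
  rw [if_neg hne, sub_zero]
  split_ifs with h
  · obtain ⟨rfl, rfl⟩ := h
    simp [constantCoeff_eq]
  · rfl

theorem card_orderedEdges_le_mu (K : Type*) [Field K] {V : Type*} [Fintype V] [LinearOrder V]
    (G : SimpleGraph V) : (orderedEdges G).card ≤ mu (binomialEdgeIdeal K G) := by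
  classical
  obtain ⟨s, hcard, hspan⟩ := exists_span_eq_card_eq_mu K G
  let c : MvPolynomial (V ⊕ V) K →ₗ[K] (orderedEdges G → K) :=
    LinearMap.pi fun e => lcoeff K
      (Finsupp.single (Sum.inl e.1.1) 1 + Finsupp.single (Sum.inr e.1.2) 1)
  have hgen : ∀ (b : MvPolynomial (V ⊕ V) K) (e : orderedEdges G),
      c (b * edgeBinomial K e.1.1 e.1.2) = Pi.single e (constantCoeff b) := by
    intro b e
    ext e'
    simp only [c, LinearMap.pi_apply, lcoeff_apply]
    rw [coeff_mul_edgeBinomial b (mem_orderedEdges.1 e'.2).1 (mem_orderedEdges.1 e.2).1,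
      Pi.single_apply]
    simp only [Subtype.ext_iff, Prod.ext_iff, eq_comm]
  have hmul : ∀ g ∈ binomialEdgeIdeal K G, ∀ b, c (b * g) = constantCoeff b • c g := by
    intro g hg
    rw [← span_image_orderedEdges] at hg
    induction hg using Submodule.span_induction with
    | mem g hg =>
      obtain ⟨e, he, rfl⟩ := hg
      intro b
      have h1 := hgen 1 ⟨e, he⟩
      rw [one_mul, map_one] at h1
      rw [hgen b ⟨e, he⟩, h1, ← Pi.single_smul, smul_eq_mul, mul_one]
    | zero => simp
    | add g g' _ _ h h' => intro b; rw [mul_add, map_add, map_add, h, h', smul_add]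
    | smul a g _ h =>
      intro b
      rw [smul_eq_mul, ← mul_assoc, h, h, map_mul, mul_smul]
  have hle : ∀ g ∈ binomialEdgeIdeal K G, c g ∈ Submodule.span K (c '' s) := by
    intro g hg
    rw [← hspan] at hg
    induction hg using Submodule.span_induction with
    | mem g hg => exact Submodule.subset_span ⟨g, hg, rfl⟩
    | zero => simp
    | add g g' _ _ h h' => rw [map_add]; exact add_mem h h'
    | smul a g hg h =>
      rw [smul_eq_mul, hmul g (hspan ▸ hg)]
      exact Submodule.smul_mem _ _ h
  have htop : Submodule.span K (c '' s) = ⊤ := by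
    rw [eq_top_iff, ← (Pi.basisFun K (orderedEdges G)).span_eq, Submodule.span_le]
    rintro _ ⟨e, rfl⟩
    have h1 := hgen 1 e
    rw [one_mul, map_one] at h1
    rw [Pi.basisFun_apply, ← h1]
    exact hle _ (edgeBinomial_mem_binomialEdgeIdeal (mem_orderedEdges.1 e.2).2)
  have hfin := finrank_span_finset_le_card (R := K) (s.image c)
  rw [Finset.coe_image, Set.finrank, htop, finrank_top, Module.finrank_pi, Fintype.card_coe] at hfin
  exact hfin.trans (Finset.card_image_le.trans hcard.le)

theorem htI_le_of_le_minimalPrime {R : Type*} [CommRing R] [IsNoetherianRing R] {J Q : Ideal R}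
    {s : Finset R} (hQ : Q ∈ (Ideal.span (s : Set R)).minimalPrimes) (hJQ : J ≤ Q) :
    htI J ≤ s.card := by
  have := hQ.isPrime
  refine (iInf₂_le (⟨Q, this⟩ : PrimeSpectrum R) hJQ).trans ?_
  rw [← PrimeSpectrum.height_eq_orderHeight]
  exact Ideal.height_le_card_of_mem_minimalPrimes_span_finset hQ

theorem htI_le_card_of_le_span {R : Type*} [CommRing R] [IsNoetherianRing R] {J : Ideal R}
    {s : Finset R} (hJ : J ≤ Ideal.span (s : Set R)) (hs : Ideal.span (s : Set R) ≠ ⊤) :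
    htI J ≤ s.card := by
  obtain ⟨Q, hQ⟩ := Ideal.nonempty_minimalPrimes hs
  exact htI_le_of_le_minimalPrime hQ (hJ.trans hQ.1.2)

theorem ne_top_of_forall_constantCoeff_eq_zero {K σ : Type*} [Field K]
    {s : Set (MvPolynomial σ K)} (hs : ∀ f ∈ s, constantCoeff f = 0) : Ideal.span s ≠ ⊤ := by
  intro h
  have hle : Ideal.span s ≤ RingHom.ker (constantCoeff : MvPolynomial σ K →+* K) :=
    Ideal.span_le.2 hs
  exact RingHom.ker_ne_top _ (top_le_iff.1 (h ▸ hle))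

theorem constantCoeff_edgeBinomial (K : Type*) [Field K] {V : Type*} (i j : V) :
    constantCoeff (edgeBinomial K i j) = 0 := by
  simp [edgeBinomial]

theorem binomialEdgeIdeal_ne_top (K : Type*) [Field K] {V : Type*} (G : SimpleGraph V) :
    binomialEdgeIdeal K G ≠ ⊤ := by
  refine ne_top_of_forall_constantCoeff_eq_zero ?_
  rintro _ ⟨i, j, -, rfl⟩
  exact constantCoeff_edgeBinomial K i j

theorem htI_binomialEdgeIdeal_le_mu (K : Type*) [Field K] {V : Type*} [Finite V]
    (G : SimpleGraph V) : htI (binomialEdgeIdeal K G) ≤ mu (binomialEdgeIdeal K G) := by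
  obtain ⟨s, hcard, hspan⟩ := exists_span_eq_card_eq_mu K G
  rw [← hcard]
  exact htI_le_card_of_le_span hspan.ge (hspan ▸ binomialEdgeIdeal_ne_top K G)

theorem edgeBinomial_mem_of_reachable {K : Type*} [Field K] {V : Type*} {H : SimpleGraph V}
    {Q : Ideal (MvPolynomial (V ⊕ V) K)} [Q.IsPrime] (hHQ : binomialEdgeIdeal K H ≤ Q)
    (hx : ∀ v, X (Sum.inl v) ∉ Q) {u v : V} (huv : H.Reachable u v) :
    edgeBinomial K u v ∈ Q := by
  rw [SimpleGraph.reachable_iff_reflTransGen] at huv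
  induction huv with
  | refl => simp [edgeBinomial]
  | @tail b c _ hbc ih =>
    have hmem := binomialEdgeIdeal_le_iff.1 hHQ b c hbc
    have hid : X (Sum.inl b) * edgeBinomial K u c =
        X (Sum.inl u) * edgeBinomial K b c + X (Sum.inl c) * edgeBinomial K u b := by
      simp only [edgeBinomial]
      ring
    have : X (Sum.inl b) * edgeBinomial K u c ∈ Q :=
      hid ▸ add_mem (Q.mul_mem_left _ hmem) (Q.mul_mem_left _ ih)
    exact (Ideal.IsPrime.mem_or_mem ‹_› this).resolve_left (hx b)

theorem htI_binomialEdgeIdeal_lt_of_not_isBridge (K : Type*) [Field K] {V : Type*} [Fintype V]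
    [LinearOrder V] {G : SimpleGraph V} {u v : V} (huv : G.Adj u v) (hb : ¬G.IsBridge s(u, v)) :
    htI (binomialEdgeIdeal K G) < (orderedEdges G).card := by
  classical
  wlog hlt : u < v generalizing u v
  · exact this huv.symm (Sym2.eq_swap ▸ hb) (lt_of_le_of_ne (not_lt.1 hlt) huv.ne.symm)
  rw [SimpleGraph.isBridge_iff, not_not] at hb
  set H := G.deleteEdges {s(u, v)}
  let P : Ideal (MvPolynomial (V ⊕ V) K) :=
    RingHom.ker (aeval (Sum.elim (fun _ => 1) fun _ => 0) : MvPolynomial (V ⊕ V) K →ₐ[K] K)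
  have hHP : binomialEdgeIdeal K H ≤ P :=
    binomialEdgeIdeal_le_iff.2 fun i j _ => by simp [P, edgeBinomial, RingHom.mem_ker]
  have hP : P.IsPrime := RingHom.ker_isPrime _
  obtain ⟨Q, hQ, hQP⟩ := Ideal.exists_minimalPrimes_le hHP
  have := hQ.isPrime
  have hGQ : binomialEdgeIdeal K G ≤ Q := by
    refine binomialEdgeIdeal_le_iff.2 fun i j hij => ?_
    refine edgeBinomial_mem_of_reachable hQ.1.2 (fun w hw => ?_) ?_
    · simpa [P, RingHom.mem_ker] using hQP hw
    · by_cases h : s(i, j) = s(u, v)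
      · rcases Sym2.eq_iff.1 h with ⟨rfl, rfl⟩ | ⟨rfl, rfl⟩
        · exact hb
        · exact hb.symm
      · exact SimpleGraph.Adj.reachable (SimpleGraph.deleteEdges_adj.2 ⟨hij, h⟩)
  rw [← span_image_orderedEdges, ← Finset.coe_image] at hQ
  refine (htI_le_of_le_minimalPrime hQ hGQ).trans_lt (Nat.cast_lt.2 ?_)
  refine Finset.card_image_le.trans_lt (Finset.card_lt_card ?_)
  refine Finset.ssubset_iff_subset_ne.2 ⟨fun e he => ?_, fun h => ?_⟩
  · have := mem_orderedEdges.1 he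
    exact mem_orderedEdges.2 ⟨this.1, (SimpleGraph.deleteEdges_le _) this.2⟩
  · have hmem : (u, v) ∈ orderedEdges G := mem_orderedEdges.2 ⟨hlt, huv⟩
    rw [← h] at hmem
    exact (SimpleGraph.deleteEdges_adj.1 (mem_orderedEdges.1 hmem).2).2 rfl

theorem htI_binomialEdgeIdeal_lt_of_three_neighbors (K : Type*) [Field K] {V : Type*} [Fintype V]
    [LinearOrder V] {G : SimpleGraph V} {v a b c : V} (ha : G.Adj v a) (hb : G.Adj v b)
    (hc : G.Adj v c) (hab : a ≠ b) (hac : a ≠ c) (hbc : b ≠ c) :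
    htI (binomialEdgeIdeal K G) < (orderedEdges G).card := by
  classical
  let toEdge : V → V × V := fun w => (min v w, max v w)
  have htoEdge : ∀ w w', toEdge w = toEdge w' → w = w' := by
    intro w w' h
    have h1 : min v w = min v w' := congrArg Prod.fst h
    have h2 : max v w = max v w' := congrArg Prod.snd h
    grind
  have htoEdge_mem : ∀ w, G.Adj v w → toEdge w ∈ orderedEdges G := by
    intro w hw
    rw [mem_orderedEdges]
    rcases lt_or_gt_of_ne hw.ne with h | h
    · simpa [toEdge, h.le, h] using hw
    · simpa [toEdge, h.le, h] using hw.symm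
  let t : Finset (V × V) := {toEdge a, toEdge b, toEdge c}
  have ht : t.card = 3 := Finset.card_eq_three.2 ⟨_, _, _, fun h => hab (htoEdge _ _ h),
    fun h => hac (htoEdge _ _ h), fun h => hbc (htoEdge _ _ h), rfl⟩
  have htG : t ⊆ orderedEdges G := by
    intro e he
    simp only [t, Finset.mem_insert, Finset.mem_singleton] at he
    rcases he with rfl | rfl | rfl <;> exact htoEdge_mem _ ‹_›
  let s : Finset (MvPolynomial (V ⊕ V) K) := {X (Sum.inl v), X (Sum.inr v)} ∪
    (orderedEdges G \ t).image fun e => edgeBinomial K e.1 e.2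
  have hxs : X (Sum.inl v) ∈ Ideal.span (s : Set (MvPolynomial (V ⊕ V) K)) :=
    Ideal.subset_span (by simp [s])
  have hys : X (Sum.inr v) ∈ Ideal.span (s : Set (MvPolynomial (V ⊕ V) K)) :=
    Ideal.subset_span (by simp [s])
  have hle : binomialEdgeIdeal K G ≤ Ideal.span (s : Set (MvPolynomial (V ⊕ V) K)) := by
    refine binomialEdgeIdeal_le_of_orderedEdges fun e he => ?_
    by_cases het : e ∈ t
    · have hve : e.1 = v ∨ e.2 = v := by
        simp only [t, Finset.mem_insert, Finset.mem_singleton] at het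
        rcases het with rfl | rfl | rfl <;> simp only [toEdge] <;> grind
      rcases hve with h | h
      · rw [edgeBinomial, h]
        exact sub_mem (Ideal.mul_mem_right _ _ hxs) (Ideal.mul_mem_left _ _ hys)
      · rw [edgeBinomial, h]
        exact sub_mem (Ideal.mul_mem_left _ _ hys) (Ideal.mul_mem_right _ _ hxs)
    · refine Ideal.subset_span (Finset.mem_union_right _ ?_)
      exact Finset.mem_image_of_mem _ (Finset.mem_sdiff.2 ⟨he, het⟩)
  have hne : Ideal.span (s : Set (MvPolynomial (V ⊕ V) K)) ≠ ⊤ := by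
    refine ne_top_of_forall_constantCoeff_eq_zero fun f hf => ?_
    simp only [s, Finset.coe_union, Finset.coe_insert, Finset.coe_singleton, Finset.coe_image,
      Set.mem_union, Set.mem_insert_iff, Set.mem_singleton_iff] at hf
    rcases hf with (rfl | rfl) | ⟨e, -, rfl⟩
    · exact constantCoeff_X _ _
    · exact constantCoeff_X _ _
    · exact constantCoeff_edgeBinomial K _ _
  refine (htI_le_card_of_le_span hle hne).trans_lt (Nat.cast_lt.2 ?_)
  have h1 : s.card ≤ 2 + (orderedEdges G \ t).card :=
    (Finset.card_union_le _ _).trans (add_le_add Finset.card_le_two Finset.card_image_le)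
  have h2 := Finset.card_sdiff_add_card_eq_card htG
  omega

/-- The ideal of `K[σ]` generated by the elements of a prime `P` that only involve the variables
in `T`, realised as the kernel of the map reducing the variables in `T` modulo `P` and fixing
the others. -/
def extendedContraction {K σ : Type*} [Field K] (P : PrimeSpectrum (MvPolynomial σ K))
    (T : Set σ) : PrimeSpectrum (MvPolynomial σ K) :=
  open Classical in
  ⟨RingHom.ker (aeval fun i => if i ∈ T then C (Ideal.Quotient.mk P.asIdeal (X i)) else X i :
      MvPolynomial σ K →ₐ[K] MvPolynomial σ (MvPolynomial σ K ⧸ P.asIdeal)),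
    RingHom.ker_isPrime _⟩

open Classical in
theorem mem_extendedContraction {K σ : Type*} [Field K] {P : PrimeSpectrum (MvPolynomial σ K)}
    {T : Set σ} {f : MvPolynomial σ K} :
    f ∈ (extendedContraction P T).asIdeal ↔
      (aeval fun i => if i ∈ T then C (Ideal.Quotient.mk P.asIdeal (X i)) else X i :
        MvPolynomial σ K →ₐ[K] MvPolynomial σ (MvPolynomial σ K ⧸ P.asIdeal)) f = 0 :=
  Iff.rfl

theorem extendedContraction_mono {K σ : Type*} [Field K] (P : PrimeSpectrum (MvPolynomial σ K)) :
    Monotone (extendedContraction P) := by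
  classical
  intro T T' hT f hf
  rw [mem_extendedContraction] at hf ⊢
  let ψ : MvPolynomial σ (MvPolynomial σ K ⧸ P.asIdeal) →ₐ[MvPolynomial σ K ⧸ P.asIdeal]
      MvPolynomial σ (MvPolynomial σ K ⧸ P.asIdeal) :=
    aeval fun i => if i ∈ T' then C (Ideal.Quotient.mk P.asIdeal (X i)) else X i
  have hψ := congrArg (ψ.restrictScalars K) hf
  rw [map_zero, ← AlgHom.comp_apply] at hψ
  rw [← hψ]
  congr 1
  refine algHom_ext fun i => ?_
  by_cases hi : i ∈ T
  · simp [hi, hT hi, ψ, ← algebraMap_eq]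
  · simp [hi, ψ]

theorem extendedContraction_le {K σ : Type*} [Field K]
    (P : PrimeSpectrum (MvPolynomial σ K)) (T : Set σ) : extendedContraction P T ≤ P := by
  classical
  refine (extendedContraction_mono P (Set.subset_univ T)).trans fun f hf => ?_
  simp only [mem_extendedContraction, Set.mem_univ, if_true] at hf
  have hC : (aeval fun i => C (Ideal.Quotient.mk P.asIdeal (X i)) :
      MvPolynomial σ K →ₐ[K] MvPolynomial σ (MvPolynomial σ K ⧸ P.asIdeal)) =
      ((Algebra.ofId (MvPolynomial σ K ⧸ P.asIdeal) _).restrictScalars K).comp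
        (Ideal.Quotient.mkₐ K P.asIdeal) :=
    algHom_ext fun i => by simp [← algebraMap_eq, Algebra.ofId_apply]
  rw [hC] at hf
  have hf' : C (Ideal.Quotient.mk P.asIdeal f) =
      (0 : MvPolynomial σ (MvPolynomial σ K ⧸ P.asIdeal)) := hf
  exact Ideal.Quotient.eq_zero_iff_mem.1 ((C_eq_zero).1 hf')

theorem X_mem_extendedContraction_iff {K σ : Type*} [Field K]
    {P : PrimeSpectrum (MvPolynomial σ K)} {T : Set σ} {i : σ} :
    X i ∈ (extendedContraction P T).asIdeal ↔ i ∈ T ∧ X i ∈ P.asIdeal := by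
  classical
  rw [mem_extendedContraction, aeval_X]
  split_ifs with h
  · simp [h, Ideal.Quotient.eq_zero_iff_mem]
  · simp [h, X_ne_zero]

theorem height_extendedContraction_add_one_le {K σ : Type*} [Field K]
    {P : PrimeSpectrum (MvPolynomial σ K)} {T T' : Set σ} (hT : T ⊆ T') {f : MvPolynomial σ K}
    (hf : f ∉ (extendedContraction P T).asIdeal) (hf' : f ∈ (extendedContraction P T').asIdeal) :
    Order.height (extendedContraction P T) + 1 ≤ Order.height (extendedContraction P T') := by
  refine Order.height_add_one_le (lt_of_le_of_ne (extendedContraction_mono P hT) fun h => hf ?_)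
  rwa [h]

theorem edgeBinomial_mem_extendedContraction {K V : Type*} [Field K]
    {P : PrimeSpectrum (MvPolynomial (V ⊕ V) K)} {T : Set (V ⊕ V)} {u v : V}
    (hxu : Sum.inl u ∈ T) (hyu : Sum.inr u ∈ T) (hxv : Sum.inl v ∈ T) (hyv : Sum.inr v ∈ T)
    (h : edgeBinomial K u v ∈ P.asIdeal) :
    edgeBinomial K u v ∈ (extendedContraction P T).asIdeal := by
  classical
  rw [mem_extendedContraction, edgeBinomial]
  simp only [map_sub, map_mul, aeval_X, hxu, hyu, hxv, hyv, if_true]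
  simp only [← map_mul, ← map_sub]
  rw [C_eq_zero]
  exact Ideal.Quotient.eq_zero_iff_mem.2 h

theorem edgeBinomial_notMem_extendedContraction {K V : Type*} [Field K]
    {P : PrimeSpectrum (MvPolynomial (V ⊕ V) K)} {T : Set (V ⊕ V)} {u v : V}
    (hxu : Sum.inl u ∈ T) (hyu : Sum.inr u ∈ T) (hxv : Sum.inl v ∉ T) (hyv : Sum.inr v ∉ T)
    (h : ¬(X (Sum.inl u) ∈ P.asIdeal ∧ X (Sum.inr u) ∈ P.asIdeal)) :
    edgeBinomial K u v ∉ (extendedContraction P T).asIdeal := by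
  classical
  rw [mem_extendedContraction, edgeBinomial]
  simp only [map_sub, map_mul, aeval_X, hxu, hyu, hxv, hyv, if_true, if_false]
  intro h0
  have hx := congrArg (coeff (Finsupp.single (Sum.inr v) 1)) h0
  have hy := congrArg (coeff (Finsupp.single (Sum.inl v) 1)) h0
  rw [mul_comm (X _)] at hx hy
  simp only [coeff_sub, coeff_C_mul, coeff_X, coeff_zero, Finsupp.single_left_inj one_ne_zero,
    reduceCtorEq, if_true, if_false, mul_zero, mul_one, sub_zero, zero_sub, neg_eq_zero] at hx hy
  exact h ⟨Ideal.Quotient.eq_zero_iff_mem.1 hx, Ideal.Quotient.eq_zero_iff_mem.1 hy⟩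

theorem height_extendedContraction_add_two_le {K V : Type*} [Field K]
    {P : PrimeSpectrum (MvPolynomial (V ⊕ V) K)} {T T' : Set (V ⊕ V)} (hT : T ⊆ T') {v : V}
    (hxT : Sum.inl v ∉ T) (hyT : Sum.inr v ∉ T) (hxT' : Sum.inl v ∈ T') (hyT' : Sum.inr v ∈ T')
    (hx : X (Sum.inl v) ∈ P.asIdeal) (hy : X (Sum.inr v) ∈ P.asIdeal) :
    Order.height (extendedContraction P T) + 2 ≤ Order.height (extendedContraction P T') := by
  have h1 := height_extendedContraction_add_one_le (P := P) (Set.subset_insert (Sum.inl v) T)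
    (f := X (Sum.inl v)) (by simp [X_mem_extendedContraction_iff, hxT])
    (by simp [X_mem_extendedContraction_iff, hx])
  have h2 := height_extendedContraction_add_one_le (P := P) (T := insert (Sum.inl v) T) (T' := T')
    (Set.insert_subset hxT' hT)
    (f := X (Sum.inr v)) (by simp [X_mem_extendedContraction_iff, hyT])
    (by simp [X_mem_extendedContraction_iff, hy, hyT'])
  calc _ = Order.height (extendedContraction P T) + 1 + 1 := by rw [add_assoc, one_add_one_eq_two]
    _ ≤ _ := (add_le_add_left h1 1).trans h2

open Classical in
theorem count_consecutive_edges_le_height {K V : Type*} [Field K] {G : SimpleGraph V} (r : V → ℕ)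
    {P : PrimeSpectrum (MvPolynomial (V ⊕ V) K)}
    (hP : binomialEdgeIdeal K G ≤ P.asIdeal) (t : ℕ) :
    (Nat.count (fun k => ∃ u v, G.Adj u v ∧ r u + 1 = k ∧ r v = k) t : ℕ∞) ≤ Order.height P := by
  set p : ℕ → Prop := fun k => ∃ u v, G.Adj u v ∧ r u + 1 = k ∧ r v = k
  let T : ℕ → Set (V ⊕ V) := fun t => {i | r (Sum.elim id id i) < t}
  have hTmono : ∀ t, T t ⊆ T (t + 1) := fun t i hi => Nat.lt_succ_of_lt hi
  let lastZero : ℕ → Prop := fun t =>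
    ∃ v, r v + 1 = t ∧ X (Sum.inl v) ∈ P.asIdeal ∧ X (Sum.inr v) ∈ P.asIdeal
  suffices h : ((Nat.count p t + if lastZero t then 1 else 0 : ℕ) : ℕ∞) ≤
      Order.height (extendedContraction P (T t)) from
    (Nat.cast_le.2 (Nat.le_add_right _ _)).trans
      (h.trans (Order.height_mono (extendedContraction_le P _)))
  induction t with
  | zero => simp [lastZero]
  | succ t ih =>
    by_cases hlast : lastZero (t + 1)
    · obtain ⟨v, hv, hx, hy⟩ := id hlast
      have hstep := height_extendedContraction_add_two_le (P := P) (hTmono t) (v := v)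
        (by simp [T]; omega) (by simp [T]; omega) (by simp [T]; omega) (by simp [T]; omega) hx hy
      refine le_trans ?_ ((add_le_add_left ih 2).trans hstep)
      norm_cast
      rw [Nat.count_succ, if_pos hlast]
      split_ifs <;> omega
    · rw [if_neg hlast, add_zero, Nat.count_succ]
      by_cases hpt : p t
      · obtain ⟨u, v, huv, hu, hv⟩ := id hpt
        rw [if_pos hpt]
        by_cases hut : lastZero t
        · rw [if_pos hut] at ih
          exact ih.trans (Order.height_mono (extendedContraction_mono P (hTmono t)))
        · rw [if_neg hut, add_zero] at ih
          have hstep := height_extendedContraction_add_one_le (P := P) (hTmono t)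
            (edgeBinomial_notMem_extendedContraction (u := u) (v := v)
              (by simp [T]; omega) (by simp [T]; omega) (by simp [T]; omega) (by simp [T]; omega)
              fun h => hut ⟨u, hu, h⟩)
            (edgeBinomial_mem_extendedContraction
              (by simp [T]; omega) (by simp [T]; omega) (by simp [T]; omega) (by simp [T]; omega)
              (binomialEdgeIdeal_le_iff.1 hP u v huv))
          rw [Nat.cast_add, Nat.cast_one]
          exact (add_le_add_left ih 1).trans hstep
      · rw [if_neg hpt, add_zero]
        exact ((Nat.cast_le.2 (Nat.le_add_right _ _)).trans ih).trans
          (Order.height_mono (extendedContraction_mono P (hTmono t)))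

theorem mu_binomialEdgeIdeal_le_htI_of_consecutive (K : Type*) [Field K] {V : Type*} [Finite V]
    {G : SimpleGraph V} {r : V → ℕ} (hr : Function.Injective r)
    (hadj : ∀ u v, G.Adj u v → r u + 1 = r v ∨ r v + 1 = r u) :
    (mu (binomialEdgeIdeal K G) : ℕ∞) ≤ htI (binomialEdgeIdeal K G) := by
  classical
  refine le_iInf₂ fun P hP => ?_
  obtain ⟨N, hN⟩ : ∃ N, ∀ v, r v < N := by
    obtain ⟨M, hM⟩ := (Set.finite_range r).bddAbove
    exact ⟨M + 1, fun v => Nat.lt_succ_of_le (hM ⟨v, rfl⟩)⟩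
  refine (Nat.cast_le.2 ?_).trans (count_consecutive_edges_le_height r hP N)
  set p : ℕ → Prop := fun k => ∃ u v, G.Adj u v ∧ r u + 1 = k ∧ r v = k
  have hgen : ∀ k, ∃ f : MvPolynomial (V ⊕ V) K, p k →
      ∃ u v, G.Adj u v ∧ r u + 1 = k ∧ r v = k ∧ f = edgeBinomial K u v := by
    intro k
    by_cases hk : p k
    · obtain ⟨u, v, huv, hu, hv⟩ := hk
      exact ⟨_, fun _ => ⟨u, v, huv, hu, hv, rfl⟩⟩
    · exact ⟨0, fun h => absurd h hk⟩
  choose f hf using hgen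
  let s := ((Finset.range N).filter p).image f
  have hs : Ideal.span (s : Set (MvPolynomial (V ⊕ V) K)) = binomialEdgeIdeal K G := by
    apply le_antisymm
    · refine Ideal.span_le.2 fun g hg => ?_
      obtain ⟨k, hk, rfl⟩ := Finset.mem_image.1 hg
      obtain ⟨u, v, huv, -, -, h⟩ := hf k (Finset.mem_filter.1 hk).2
      rw [h]
      exact edgeBinomial_mem_binomialEdgeIdeal huv
    · have hmem : ∀ u v, G.Adj u v → r u + 1 = r v →
          edgeBinomial K u v ∈ Ideal.span (s : Set (MvPolynomial (V ⊕ V) K)) := by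
        intro u v huv h
        have hp : p (r v) := ⟨u, v, huv, h, rfl⟩
        obtain ⟨u', v', -, hu', hv', hf'⟩ := hf _ hp
        obtain rfl := hr hv'
        obtain rfl : u' = u := hr (by omega)
        rw [← hf']
        exact Ideal.subset_span (Finset.mem_image_of_mem _
          (Finset.mem_filter.2 ⟨Finset.mem_range.2 (hN _), hp⟩))
      refine binomialEdgeIdeal_le_iff.2 fun u v huv => ?_
      rcases hadj u v huv with h | h
      · exact hmem u v huv h
      · rw [edgeBinomial_swap]
        exact neg_mem (hmem v u huv.symm h)
  have hmu : mu (binomialEdgeIdeal K G) ≤ s.card := Nat.sInf_le ⟨s, rfl, hs⟩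
  refine hmu.trans ?_
  rw [Nat.count_eq_card_filter_range]
  exact Finset.card_image_le

theorem exists_rank_of_isPathGraph_components {V : Type*} [Finite V] {G : SimpleGraph V}
    (h : ∀ c : G.ConnectedComponent, IsPathGraph (G.induce (compSupp G c))) :
    ∃ r : V → ℕ, Function.Injective r ∧
      ∀ u v, G.Adj u v → r u + 1 = r v ∨ r v + 1 = r u := by
  classical
  choose m e he using h
  obtain ⟨N, ⟨φ⟩⟩ := Finite.exists_equiv_fin G.ConnectedComponent
  let pos : V → ℕ := fun v => e (G.connectedComponentMk v) ⟨v, rfl⟩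
  have pos_eq : ∀ (c : G.ConnectedComponent) (v : V) (hv : G.connectedComponentMk v = c),
      pos v = e c ⟨v, hv⟩ := by
    rintro c v rfl
    rfl
  obtain ⟨M, hM⟩ : ∃ M, ∀ v, pos v < M := by
    obtain ⟨M, hM⟩ := (Set.finite_range pos).bddAbove
    exact ⟨M + 1, fun v => Nat.lt_succ_of_le (hM ⟨v, rfl⟩)⟩
  refine ⟨fun v => pos v + M * φ (G.connectedComponentMk v), ?_, ?_⟩
  · intro u v huv
    have hM0 : 0 < M := (Nat.zero_le _).trans_lt (hM u)
    have hpos : pos u = pos v := by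
      simpa [Nat.mod_eq_of_lt (hM _)] using congrArg (· % M) huv
    have hcomp : G.connectedComponentMk u = G.connectedComponentMk v := by
      have := congrArg (· / M) huv
      simp only [Nat.add_mul_div_left _ _ hM0, Nat.div_eq_of_lt (hM _), zero_add] at this
      exact φ.injective (Fin.ext this)
    rw [pos_eq _ u hcomp, pos_eq _ v rfl] at hpos
    exact congrArg Subtype.val ((e _).injective (Fin.ext hpos))
  · intro u v huv
    have hcomp : G.connectedComponentMk u = G.connectedComponentMk v :=
      SimpleGraph.ConnectedComponent.sound huv.reachable
    have hadj := (he (G.connectedComponentMk v) ⟨u, hcomp⟩ ⟨v, rfl⟩).1 huv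
    rw [← pos_eq, ← pos_eq] at hadj
    simp only [hcomp]
    omega

theorem isPathGraph_of_isTree {V : Type*} [Finite V] {T : SimpleGraph V} (hT : T.IsTree)
    (hdeg : ∀ v a b c, T.Adj v a → T.Adj v b → T.Adj v c → a = b ∨ a = c ∨ b = c) :
    IsPathGraph T := by
  classical
  have := hT.connected.nonempty
  obtain ⟨u, v, p, hp, hmax⟩ := SimpleGraph.Walk.exists_isPath_forall_isPath_length_le_length T
  have hinj : ∀ i j, i ≤ p.length → j ≤ p.length → p.getVert i = p.getVert j → i = j :=
    fun i j hi hj h => hp.getVert_injOn hi hj h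
  have hclosed : ∀ i w, i ≤ p.length → T.Adj (p.getVert i) w → w ∈ p.support := by
    intro i w hi hadj
    by_contra hw
    rcases Nat.eq_zero_or_pos i with rfl | hi0
    · rw [p.getVert_zero] at hadj
      have := hmax _ _ (.cons hadj.symm p) ((SimpleGraph.Walk.cons_isPath_iff _ _).2 ⟨hp, hw⟩)
      simp at this
    rcases hi.eq_or_lt with rfl | hil
    · rw [p.getVert_length] at hadj
      have := hmax _ _ (p.concat hadj) (hp.concat hw hadj)
      simp at this
    · have h1 := p.adj_getVert_succ hil
      have h2 := p.adj_getVert_succ (i := i - 1) (by omega)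
      rw [Nat.sub_add_cancel hi0] at h2
      rcases hdeg _ _ _ _ h1 h2.symm hadj with h | h | h
      · have := hinj _ _ (by omega) (by omega) h
        omega
      · exact hw (h ▸ p.getVert_mem_support _)
      · exact hw (h ▸ p.getVert_mem_support _)
  have hall : ∀ w, w ∈ p.support := by
    intro w
    have hreach := hT.connected.preconnected u w
    rw [SimpleGraph.reachable_iff_reflTransGen] at hreach
    induction hreach with
    | refl => exact p.start_mem_support
    | tail _ hadj ih =>
      obtain ⟨i, rfl, hi⟩ := SimpleGraph.Walk.mem_support_iff_exists_getVert.1 ih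
      exact hclosed i _ hi hadj
  have hconsec : ∀ i j, i < j → j ≤ p.length → T.Adj (p.getVert i) (p.getVert j) → i + 1 = j := by
    intro i j hij hj hadj
    have hmem : p.getVert j ∈ (p.drop i).support := by
      have := (p.drop i).getVert_mem_support (j - i)
      rwa [SimpleGraph.Walk.drop_getVert, Nat.add_sub_cancel' hij.le] at this
    have := hT.isAcyclic.eq_snd_of_adj_start (hp.drop i) hadj hmem
    rw [SimpleGraph.Walk.snd, SimpleGraph.Walk.drop_getVert] at this
    exact (hinj _ _ hj (by omega) this).symm
  let g : Fin (p.length + 1) → V := fun i => p.getVert i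
  have hg : Function.Bijective g := by
    refine ⟨fun i j h => Fin.ext (hinj _ _ (by omega) (by omega) h), fun w => ?_⟩
    obtain ⟨i, rfl, hi⟩ := SimpleGraph.Walk.mem_support_iff_exists_getVert.1 (hall w)
    exact ⟨⟨i, by omega⟩, rfl⟩
  refine ⟨p.length + 1, (Equiv.ofBijective g hg).symm, fun a b => ?_⟩
  obtain ⟨i, rfl⟩ := hg.2 a
  obtain ⟨j, rfl⟩ := hg.2 b
  simp only [Equiv.ofBijective_symm_apply_apply]
  constructor
  · intro hadj
    rcases lt_trichotomy (i : ℕ) j with h | h | h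
    · exact .inl (hconsec _ _ h (by omega) hadj)
    · exact absurd (congrArg g (Fin.ext h)) hadj.ne
    · exact .inr (hconsec _ _ h (by omega) hadj.symm)
  · rintro (h | h)
    · have := p.adj_getVert_succ (i := i) (by omega)
      rwa [h] at this
    · have := p.adj_getVert_succ (i := j) (by omega)
      rw [h] at this
      exact this.symm

theorem isPathGraph_induce_compSupp {V : Type*} [Finite V] {G : SimpleGraph V}
    (hG : G.IsAcyclic)
    (hdeg : ∀ v a b c, G.Adj v a → G.Adj v b → G.Adj v c → a = b ∨ a = c ∨ b = c)
    (c : G.ConnectedComponent) : IsPathGraph (G.induce (compSupp G c)) := by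
  refine isPathGraph_of_isTree (hG.isTree_connectedComponent c) fun v a b d ha hb hd => ?_
  simpa only [Subtype.ext_iff] using hdeg v a b d ha hb hd

/-- The binomial edge ideal `J_G` is a complete intersection ideal
(its minimal number of generators equals its height) if and only if every connected
component of `G` is a path graph. -/
theorem binomialEdgeIdeal_completeIntersection_iff
    (K : Type*) [Field K] (n : ℕ) (G : SimpleGraph (Fin n)) :
    ((mu (binomialEdgeIdeal K G) : ℕ∞) = htI (binomialEdgeIdeal K G)) ↔
      ∀ c : G.ConnectedComponent, IsPathGraph (G.induce (compSupp G c)) := by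
  constructor
  · intro h
    have hge : ¬htI (binomialEdgeIdeal K G) < (orderedEdges G).card := by
      rw [← h, not_lt]
      exact Nat.cast_le.2 (card_orderedEdges_le_mu K G)
    refine isPathGraph_induce_compSupp ?_ fun v a b c ha hb hc => ?_
    · rw [SimpleGraph.isAcyclic_iff_forall_adj_isBridge]
      intro u v huv
      by_contra hb
      exact hge (htI_binomialEdgeIdeal_lt_of_not_isBridge K huv hb)
    · by_contra! hne
      exact hge (htI_binomialEdgeIdeal_lt_of_three_neighbors K ha hb hc hne.1 hne.2.1 hne.2.2)
  · intro h
    obtain ⟨r, hr, hadj⟩ := exists_rank_of_isPathGraph_components h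
    exact le_antisymm (mu_binomialEdgeIdeal_le_htI_of_consecutive K hr hadj)
      (htI_binomialEdgeIdeal_le_mu K G)

end
end

section
/- For every graph G in the family 𝒢_3, the quotient ring S/J_G is Cohen–Macaulay. -/
open MvPolynomial

noncomputable section

/-- The adjacency-generating relation of the graph in the family `𝒢₃` with path
lengths `r`, `s`, `t`: three paths `u_1—…—u_r`, `v_1—…—v_s`, `w_1—…—w_t` together
with the triangle `u_1—v_1—w_1—u_1`. -/
def g3Rel (r s t : ℕ) : (Fin r ⊕ (Fin s ⊕ Fin t)) → (Fin r ⊕ (Fin s ⊕ Fin t)) → Prop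
  | Sum.inl i, Sum.inl j => (i : ℕ) + 1 = (j : ℕ)
  | Sum.inr (Sum.inl i), Sum.inr (Sum.inl j) => (i : ℕ) + 1 = (j : ℕ)
  | Sum.inr (Sum.inr i), Sum.inr (Sum.inr j) => (i : ℕ) + 1 = (j : ℕ)
  | Sum.inl i, Sum.inr (Sum.inl j) => (i : ℕ) = 0 ∧ (j : ℕ) = 0
  | Sum.inl i, Sum.inr (Sum.inr j) => (i : ℕ) = 0 ∧ (j : ℕ) = 0
  | Sum.inr (Sum.inl i), Sum.inr (Sum.inr j) => (i : ℕ) = 0 ∧ (j : ℕ) = 0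
  | _, _ => False

/-- The member of the family `𝒢₃` with path lengths `r`, `s`, `t`. -/
def graphG3 (r s t : ℕ) : SimpleGraph (Fin r ⊕ (Fin s ⊕ Fin t)) :=
  SimpleGraph.fromRel (g3Rel r s t)

/-- The adjacency-generating relation of the graph in the family `𝒢₄` with path
lengths `r`, `s`: two paths `u_1—…—u_r` and `v_1—…—v_s` together with the
edges `u_1—v_1` and `u_2—v_2`. -/
def g4Rel (r s : ℕ) : (Fin r ⊕ Fin s) → (Fin r ⊕ Fin s) → Prop
  | Sum.inl i, Sum.inl j => (i : ℕ) + 1 = (j : ℕ)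
  | Sum.inr i, Sum.inr j => (i : ℕ) + 1 = (j : ℕ)
  | Sum.inl i, Sum.inr j => ((i : ℕ) = 0 ∧ (j : ℕ) = 0) ∨ ((i : ℕ) = 1 ∧ (j : ℕ) = 1)
  | _, _ => False

/-- The member of the family `𝒢₄` with path lengths `r`, `s`. -/
def graphG4 (r s : ℕ) : SimpleGraph (Fin r ⊕ Fin s) :=
  SimpleGraph.fromRel (g4Rel r s)

section PermutableRegular

open scoped Polynomial

variable {R : Type*} [CommRing R]

/-- `f` is a nonzerodivisor modulo the ideal `I`. -/
def IsRegularModulo (I : Ideal R) (f : R) : Prop :=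
  ∀ g, f * g ∈ I → g ∈ I

/-- A family of elements which is a weakly regular sequence in every order. -/
def IsPermutableRegular {ι : Type*} (w : ι → R) : Prop :=
  ∀ (T : Set ι) (i : ι), i ∉ T → IsRegularModulo (Ideal.span (w '' T)) (w i)

lemma IsRegularModulo.sup_span_singleton {I : Ideal R} {z F : R} (hz : IsRegularModulo I z)
    (hF : IsRegularModulo (I ⊔ Ideal.span {z}) F) :
    IsRegularModulo (I ⊔ Ideal.span {F}) z := by
  intro f hf
  obtain ⟨i, hi, c, hc, hic⟩ := Submodule.mem_sup.1 hf
  obtain ⟨g, rfl⟩ := Ideal.mem_span_singleton'.1 hc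
  have hg : g ∈ I ⊔ Ideal.span {z} := by
    apply hF
    refine Submodule.mem_sup.2 ⟨-i, I.neg_mem hi, z * f,
      Ideal.mem_span_singleton'.2 ⟨f, mul_comm _ _⟩, ?_⟩
    linear_combination -hic
  obtain ⟨j, hj, d, hd, hjd⟩ := Submodule.mem_sup.1 hg
  obtain ⟨h, rfl⟩ := Ideal.mem_span_singleton'.1 hd
  have key : f - F * h ∈ I := by
    apply hz
    have : z * (f - F * h) = i + F * j := by
      linear_combination -hic - F * hjd
    rw [this]
    exact I.add_mem hi (I.mul_mem_left _ hj)
  exact Submodule.mem_sup.2 ⟨f - F * h, key, F * h,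
    Ideal.mem_span_singleton'.2 ⟨h, mul_comm _ _⟩, by ring⟩

lemma IsRegularModulo.mul {I : Ideal R} {f g : R} (hf : IsRegularModulo I f)
    (hg : IsRegularModulo I g) : IsRegularModulo I (f * g) := fun h hh ↦
  hg _ (hf _ (by rwa [← mul_assoc]))

lemma IsRegularModulo.polynomial_map_C {I : Ideal R} {p : R[X]}
    (hp : IsRegularModulo I (p.coeff 0)) : IsRegularModulo (I.map Polynomial.C) p := by
  intro g hg
  rw [Ideal.mem_map_C_iff] at hg ⊢
  intro n
  induction n using Nat.strong_induction_on with
  | _ n ih =>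
    apply hp
    have h := hg n
    rw [Polynomial.coeff_mul, ← Finset.add_sum_erase _ _ (a := (0, n)) (by simp)] at h
    refine (I.add_mem_iff_left (I.sum_mem fun x hx ↦ I.mul_mem_left _ (ih _ ?_))).1 h
    obtain ⟨a, b⟩ := x
    rw [Finset.mem_erase, Finset.HasAntidiagonal.mem_antidiagonal, ne_eq, Prod.mk.injEq] at hx
    simp only at hx ⊢
    omega

lemma mem_map_C_sup_span_X_iff {I : Ideal R} {p : R[X]} :
    p ∈ I.map Polynomial.C ⊔ Ideal.span {Polynomial.X} ↔ p.coeff 0 ∈ I := by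
  constructor
  · intro h
    obtain ⟨a, ha, b, hb, rfl⟩ := Submodule.mem_sup.1 h
    obtain ⟨c, rfl⟩ := Ideal.mem_span_singleton'.1 hb
    simpa using Ideal.mem_map_C_iff.1 ha 0
  · intro h
    exact Submodule.mem_sup.2 ⟨Polynomial.C (p.coeff 0), Ideal.mem_map_of_mem _ h,
      p.divX * Polynomial.X, Ideal.mem_span_singleton'.2 ⟨_, rfl⟩,
      by rw [add_comm]; exact Polynomial.divX_mul_X_add p⟩

lemma IsRegularModulo.polynomial_map_C_sup_X {I : Ideal R} {p : R[X]}
    (hp : IsRegularModulo I (p.coeff 0)) :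
    IsRegularModulo (I.map Polynomial.C ⊔ Ideal.span {Polynomial.X}) p := by
  intro g hg
  rw [mem_map_C_sup_span_X_iff] at hg ⊢
  rw [Polynomial.mul_coeff_zero] at hg
  exact hp _ hg

/-- A family in `R` together with the variable of `R[X]`. -/
def adjoinVariable {ι : Type*} (w : ι → R) : Option ι → R[X]
  | none => Polynomial.X
  | some i => Polynomial.C (w i)

lemma span_adjoinVariable_image {ι : Type*} (w : ι → R) (T : Set (Option ι)) :
    (none ∉ T → Ideal.span (adjoinVariable w '' T) =
      (Ideal.span (w '' (some ⁻¹' T))).map Polynomial.C) ∧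
    (none ∈ T → Ideal.span (adjoinVariable w '' T) =
      (Ideal.span (w '' (some ⁻¹' T))).map Polynomial.C ⊔ Ideal.span {Polynomial.X}) := by
  have key : adjoinVariable w '' (some '' (some ⁻¹' T)) = Polynomial.C '' (w '' (some ⁻¹' T)) := by
    simp only [Set.image_image]
    rfl
  constructor <;> intro h
  · rw [Ideal.map_span, ← key]
    congr 2
    ext (_ | i) <;> simp [h]
  · rw [Ideal.map_span, ← key, ← Ideal.span_union]
    congr 1
    ext q
    constructor
    · rintro ⟨_ | i, hi, rfl⟩
      · exact Or.inr rfl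
      · exact Or.inl ⟨some i, ⟨i, hi, rfl⟩, rfl⟩
    · rintro (⟨_, ⟨i, hi, rfl⟩, rfl⟩ | hq)
      · exact ⟨some i, hi, rfl⟩
      · exact ⟨none, h, hq.symm⟩

lemma IsRegularModulo.adjoinVariable {ι : Type*} {w : ι → R} {T : Set (Option ι)} {p : R[X]}
    (hp : IsRegularModulo (Ideal.span (w '' (some ⁻¹' T))) (p.coeff 0)) :
    IsRegularModulo (Ideal.span (adjoinVariable w '' T)) p := by
  by_cases h : none ∈ T
  · rw [(span_adjoinVariable_image w T).2 h]
    exact hp.polynomial_map_C_sup_X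
  · rw [(span_adjoinVariable_image w T).1 h]
    exact hp.polynomial_map_C

lemma isRegularModulo_X {I : Ideal R} :
    IsRegularModulo (I.map Polynomial.C) (Polynomial.X : R[X]) := by
  intro g hg
  rw [Ideal.mem_map_C_iff] at hg ⊢
  intro n
  simpa using hg (n + 1)

lemma IsPermutableRegular.adjoinVariable {ι : Type*} {w : ι → R} (hw : IsPermutableRegular w) :
    IsPermutableRegular (adjoinVariable w) := by
  rintro T (_ | i) hi
  · rw [(span_adjoinVariable_image w T).1 hi]
    exact isRegularModulo_X
  · refine IsRegularModulo.adjoinVariable ?_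
    simpa [_root_.adjoinVariable] using hw (some ⁻¹' T) i hi

lemma IsPermutableRegular.comp {ι κ : Type*} {w : ι → R} (hw : IsPermutableRegular w)
    {f : κ → ι} (hf : Function.Injective f) : IsPermutableRegular (w ∘ f) := by
  intro T i hi
  rw [Set.image_comp]
  exact hw _ _ (by simpa [hf.eq_iff] using hi)

lemma IsPermutableRegular.map_of_ker_eq {ι R' : Type*} [CommRing R'] {w : ι → R}
    (hw : IsPermutableRegular w) {F : R}
    (hF : ∀ T : Set ι, IsRegularModulo (Ideal.span (w '' T)) F)
    {φ : R →+* R'} (hφ : Function.Surjective φ) (hker : RingHom.ker φ = Ideal.span {F}) :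
    IsPermutableRegular (φ ∘ w) := by
  intro T i hi g hg
  obtain ⟨g, rfl⟩ := hφ g
  have hmem : ∀ h, φ h ∈ Ideal.span (φ ∘ w '' T) ↔
      h ∈ Ideal.span (w '' T) ⊔ Ideal.span {F} := by
    intro h
    rw [Set.image_comp, ← Ideal.map_span, ← hker, ← Ideal.comap_map_of_surjective' φ hφ,
      Ideal.mem_comap]
  rw [Function.comp_apply, ← map_mul, hmem] at hg
  rw [hmem]
  refine (hw T i hi).sup_span_singleton ?_ g hg
  have := hF (insert i T)
  rwa [Set.image_insert_eq, Set.insert_eq, Ideal.span_union, sup_comm] at this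

/-- The relation cutting out the ring obtained by attaching a whisker. -/
def whiskerRelation (l m : R) : R[X][X] :=
  Polynomial.C (Polynomial.C l) * (Polynomial.C (Polynomial.C l) + Polynomial.X) -
    Polynomial.C (Polynomial.C m) * Polynomial.C Polynomial.X

lemma IsPermutableRegular.isRegularModulo_whiskerRelation {ι : Type*} {w : ι → R}
    (hw : IsPermutableRegular w) (i₀ : ι) (m : R) (T : Set (Option (Option ι)))
    (hT : some (some i₀) ∉ T) :
    IsRegularModulo (Ideal.span (_root_.adjoinVariable (_root_.adjoinVariable w) '' T))
      (whiskerRelation (w i₀) m) := by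
  refine IsRegularModulo.adjoinVariable (IsRegularModulo.adjoinVariable ?_)
  have h := hw (some ⁻¹' (some ⁻¹' T)) i₀ hT
  simpa [whiskerRelation] using h.mul h

lemma whiskerRelation_mem_nonZeroDivisors {ι : Type*} {w : ι → R}
    (hw : IsPermutableRegular w) (i₀ : ι) (m : R) :
    whiskerRelation (w i₀) m ∈ nonZeroDivisors R[X][X] := by
  rw [mem_nonZeroDivisors_iff_right]
  intro g hg
  have := hw.isRegularModulo_whiskerRelation i₀ m ∅ (by simp) g
  simpa [mul_comm _ g, hg] using this

/-- The index in `R[X][X]` of each parameter of the ring obtained by attaching a whisker. -/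
def whiskerIndex {ι : Type*} [DecidableEq ι] (i₀ : ι) : Option ι → Option (Option ι)
  | none => none
  | some i => if i = i₀ then some none else some (some i)

lemma whiskerIndex_injective {ι : Type*} [DecidableEq ι] (i₀ : ι) :
    Function.Injective (whiskerIndex i₀) := by
  rintro (_ | i) (_ | j) h
  · rfl
  · simp only [whiskerIndex] at h; split_ifs at h
  · simp only [whiskerIndex] at h; split_ifs at h
  · simp only [whiskerIndex] at h
    split_ifs at h <;> simp_all

lemma IsPermutableRegular.whisker {ι R' : Type*} [DecidableEq ι] [CommRing R'] {w : ι → R}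
    (hw : IsPermutableRegular w) (i₀ : ι) (m : R) {φ : R[X][X] →+* R'}
    (hφ : Function.Surjective φ)
    (hker : RingHom.ker φ = Ideal.span {whiskerRelation (w i₀) m}) :
    IsPermutableRegular
      (φ ∘ _root_.adjoinVariable (_root_.adjoinVariable w) ∘ whiskerIndex i₀) := by
  refine IsPermutableRegular.map_of_ker_eq
    (hw.adjoinVariable.adjoinVariable.comp (whiskerIndex_injective i₀)) (fun T ↦ ?_) hφ hker
  rw [Set.image_comp]
  refine hw.isRegularModulo_whiskerRelation i₀ m _ ?_
  rintro ⟨_ | i, -, hi⟩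
  · simp [whiskerIndex] at hi
  · simp only [whiskerIndex] at hi
    split_ifs at hi with h
    · simp at hi
    · exact h (by simpa using hi)

lemma ringKrullDim_whisker_le [IsNoetherianRing R] {ι R' : Type*} [CommRing R'] {w : ι → R}
    (hw : IsPermutableRegular w) (i₀ : ι) (m : R) {φ : R[X][X] →+* R'}
    (hφ : Function.Surjective φ) (hF : φ (whiskerRelation (w i₀) m) = 0) {d : ℕ}
    (hd : ringKrullDim R ≤ d) : ringKrullDim R' ≤ (d + 1 : ℕ) := by
  have h := ringKrullDim_succ_le_of_surjective φ hφ
    (whiskerRelation_mem_nonZeroDivisors hw i₀ m) hF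
  rw [Polynomial.ringKrullDim_of_isNoetherianRing, Polynomial.ringKrullDim_of_isNoetherianRing] at h
  have h2 : ringKrullDim R' + 1 ≤ ((d + 1 : ℕ) : WithBot ℕ∞) + 1 := h.trans (by
    push_cast
    gcongr)
  exact ENat.WithBot.add_le_add_one_right_iff.1 h2

lemma length_le_supportDim_of_isRegular [IsNoetherianRing R] (rs : List R) {M : Type*}
    [AddCommGroup M] [Module R M] [Module.Finite R M]
    (h : RingTheory.Sequence.IsRegular M rs) :
    (rs.length : WithBot ℕ∞) ≤ Module.supportDim R M := by
  induction rs generalizing M with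
  | nil =>
    have := h.nontrivial
    have : Nonempty (Module.support R M) := Module.nonempty_support_of_nontrivial.to_subtype
    simpa [Module.supportDim] using Order.krullDim_nonneg (α := Module.support R M)
  | cons x xs ih =>
    rw [RingTheory.Sequence.isRegular_cons_iff] at h
    refine le_trans ?_ (Module.supportDim_quotSMulTop_succ_le_of_notMem_minimalPrimes
      fun _ ↦ h.1.notMem_of_mem_minimalPrimes)
    push_cast [List.length_cons]
    gcongr
    exact ih h.2

lemma IsPermutableRegular.isRegular_map {ι : Type*} {w : ι → R} (hw : IsPermutableRegular w)
    (l : List ι) (hl : l.Nodup) (hne : Ideal.span (Set.range w) ≠ ⊤) :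
    RingTheory.Sequence.IsRegular R (l.map w) := by
  refine ⟨⟨fun i hi ↦ ?_⟩, ?_⟩
  · rw [isSMulRegular_on_quot_iff_lsmul_comap_le]
    intro g hg
    simp only [List.length_map] at hi
    have hT : Ideal.ofList ((l.map w).take i) = Ideal.span (w '' {a | a ∈ l.take i}) := by
      rw [← List.map_take, Ideal.ofList]
      congr 1
      ext
      exact List.mem_map
    rw [hT] at hg ⊢
    simp only [smul_eq_mul, Ideal.mul_top, Submodule.mem_comap] at hg ⊢
    refine hw _ l[i] ?_ g (by simpa using hg)
    intro hmem
    obtain ⟨j, hj, hji⟩ := List.mem_take_iff_getElem.1 hmem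
    have := (hl.getElem_inj_iff).1 hji
    omega
  · intro h
    apply hne
    rw [eq_top_iff, h, smul_eq_mul, Ideal.mul_top, Ideal.ofList]
    apply Ideal.span_mono
    rintro _ hx
    obtain ⟨i, -, rfl⟩ := List.mem_map.1 hx
    exact ⟨i, rfl⟩

lemma IsPermutableRegular.map_of_bijective {ι R' : Type*} [CommRing R'] {w : ι → R}
    (hw : IsPermutableRegular w) {φ : R →+* R'} (hφ : Function.Bijective φ) :
    IsPermutableRegular (φ ∘ w) := by
  intro T i hi g hg
  obtain ⟨g, rfl⟩ := hφ.2 g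
  have hmem : ∀ h, φ h ∈ Ideal.span (φ ∘ w '' T) ↔ h ∈ Ideal.span (w '' T) := by
    intro h
    rw [Set.image_comp, ← Ideal.map_span, ← Ideal.mem_comap, Ideal.comap_map_of_bijective φ hφ]
  rw [Function.comp_apply, ← map_mul, hmem] at hg
  exact (hmem g).2 (hw T i hi g hg)

lemma isPermutableRegular_X (K σ : Type*) [Field K] :
    IsPermutableRegular (MvPolynomial.X : σ → MvPolynomial σ K) := by
  intro T i hi g hg
  rw [MvPolynomial.mem_ideal_span_X_image] at hg ⊢
  intro m hm
  obtain ⟨k, hk, hk'⟩ := hg (m + Finsupp.single i 1) (by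
    rw [mul_comm, MvPolynomial.mem_support_iff, MvPolynomial.coeff_mul_X]
    exact MvPolynomial.mem_support_iff.1 hm)
  refine ⟨k, hk, ?_⟩
  have : k ≠ i := by rintro rfl; exact hi hk
  simpa [Finsupp.single_apply, this.symm] using hk'

lemma ringKrullDim_le_of_isIntegral (A B : Type*) [CommRing A] [CommRing B] [Algebra A B]
    [Algebra.IsIntegral A B] : ringKrullDim B ≤ ringKrullDim A :=
  Order.krullDim_le_of_strictMono (PrimeSpectrum.comap (algebraMap A B)) fun P _ hPQ ↦
    Ideal.IsIntegral.comap_lt_comap (I := P.asIdeal) hPQ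

end PermutableRegular

section WhiskerPresentation

open scoped Polynomial

universe u

variable {K R R' : Type*} [CommRing R'] [CommRing K] [CommRing R] [Algebra K R'] [Algebra K R]

/-- The map `R[X][X] → R'` extending `i`, sending the inner variable to `a` and the outer one
to `t`. -/
def whiskerPresentation (i : R →ₐ[K] R') (a t : R') : R[X][X] →ₐ[K] R' :=
  Polynomial.eval₂AlgHom (Polynomial.eval₂AlgHom i a fun _ ↦ Commute.all _ _) t
    fun _ ↦ Commute.all _ _

lemma whiskerPresentation_C_C (i : R →ₐ[K] R') (a t : R') (r : R) :
    whiskerPresentation i a t (Polynomial.C (Polynomial.C r)) = i r := by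
  simp [whiskerPresentation]

lemma whiskerPresentation_C_X (i : R →ₐ[K] R') (a t : R') :
    whiskerPresentation i a t (Polynomial.C Polynomial.X) = a := by
  simp [whiskerPresentation]

lemma whiskerPresentation_X (i : R →ₐ[K] R') (a t : R') :
    whiskerPresentation i a t Polynomial.X = t := by
  simp [whiskerPresentation]

/-- Let `R'` be the universal extension of `R` by elements `x', y'` with `x y' = x' y`.
In coordinates `l = α x + β y` and `m = γ x + δ y` with `αδ - βγ = 1`, it is obtained by adjoining
the coordinates `a` and `l + t` of `(x', y')` subject to `l (l + t) = m a`. -/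
lemma whiskerPresentation_surjective_and_ker {K : Type*} {R R' : Type u} [CommRing K] [CommRing R]
    [CommRing R'] [Algebra K R] [Algebra K R'] {i : R →ₐ[K] R'} {x y : R} {x' y' : R'}
    (hedge : i x * y' = x' * i y)
    (hlift : ∀ (A : Type u) [CommRing A] [Algebra K A] (f : R →ₐ[K] A) (x₀ y₀ : A),
      f x * y₀ = x₀ * f y → ∃ ψ : R' →ₐ[K] A, ψ.comp i = f ∧ ψ x' = x₀ ∧ ψ y' = y₀)
    (hgen : ∀ A : Subalgebra K R', (∀ r, i r ∈ A) → x' ∈ A → y' ∈ A → ⊤ ≤ A)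
    {α β γ δ : K} (hdet : α * δ - β * γ = 1) {l m : R} {a t : R'}
    (hl : l = algebraMap K _ α * x + algebraMap K _ β * y)
    (hm : m = algebraMap K _ γ * x + algebraMap K _ δ * y)
    (ha : a = algebraMap K _ α * x' + algebraMap K _ β * y')
    (ht : t = algebraMap K _ γ * x' + algebraMap K _ δ * y' - i l) :
    Function.Surjective (whiskerPresentation i a t) ∧
      RingHom.ker (whiskerPresentation i a t : R[X][X] →+* R') =
        Ideal.span {whiskerRelation l m} := by
  have hdet' (A : Type u) [CommRing A] [Algebra K A] : algebraMap K A α * algebraMap K A δ -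
      algebraMap K A β * algebraMap K A γ = 1 := by
    rw [← map_mul, ← map_mul, ← map_sub, hdet, map_one]
  set φ := whiskerPresentation i a t
  let I := Ideal.span {whiskerRelation l m}
  let π : R[X][X] →ₐ[K] R[X][X] ⧸ I := Ideal.Quotient.mkₐ K I
  let ι : R →ₐ[K] R[X][X] :=
    (Polynomial.CAlgHom (R := K)).comp (Polynomial.CAlgHom (R := K))
  let A : R[X][X] := Polynomial.C Polynomial.X
  let B : R[X][X] := ι l + Polynomial.X
  let xq : R[X][X] := algebraMap K _ δ * A - algebraMap K _ β * B
  let yq : R[X][X] := algebraMap K _ α * B - algebraMap K _ γ * A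
  have hW : whiskerRelation l m = ι l * B - ι m * A := rfl
  have hrel : π (ι x) * π yq = π xq * π (ι y) := by
    rw [← sub_eq_zero, ← map_mul, ← map_mul, ← map_sub]
    refine Ideal.Quotient.eq_zero_iff_mem.2 (Ideal.mem_span_singleton'.2 ⟨1, ?_⟩)
    have hιl : ι l = algebraMap K _ α * ι x + algebraMap K _ β * ι y := by
      rw [hl, map_add, map_mul, map_mul, AlgHom.commutes, AlgHom.commutes]
    have hιm : ι m = algebraMap K _ γ * ι x + algebraMap K _ δ * ι y := by
      rw [hm, map_add, map_mul, map_mul, AlgHom.commutes, AlgHom.commutes]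
    rw [hW, hιm]
    simp only [xq, yq]
    linear_combination B * hιl
  obtain ⟨ψ, hψi, hψx, hψy⟩ := hlift _ (π.comp ι) (π xq) (π yq) hrel
  have hψι : ∀ r, ψ (i r) = π (ι r) := fun r ↦ DFunLike.congr_fun hψi r
  have hφι : ∀ r, φ (ι r) = i r := whiskerPresentation_C_C i a t
  have hφA : φ A = a := whiskerPresentation_C_X i a t
  have hφX : φ Polynomial.X = t := whiskerPresentation_X i a t
  have hφB : φ B = i l + t := by
    rw [map_add, hφι, hφX]
  have hφxq : φ xq = x' := by
    simp only [xq, map_sub, map_mul, AlgHom.commutes, hφA, hφB, ha, ht]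
    linear_combination x' * hdet' R'
  have hφyq : φ yq = y' := by
    simp only [yq, map_sub, map_mul, AlgHom.commutes, hφA, hφB, ha, ht]
    linear_combination y' * hdet' R'
  have hA : algebraMap K _ α * xq + algebraMap K _ β * yq = A := by
    linear_combination A * hdet' R[X][X]
  have hX : algebraMap K _ γ * xq + algebraMap K _ δ * yq - ι l = Polynomial.X := by
    simp only [xq, yq, B]
    linear_combination (ι l + Polynomial.X) * hdet' R[X][X]
  have hψa : ψ a = π A := by
    rw [ha, map_add, map_mul, map_mul, AlgHom.commutes, AlgHom.commutes, hψx, hψy,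
      ← AlgHom.commutes π, ← AlgHom.commutes π, ← map_mul, ← map_mul, ← map_add, hA]
  have hψt : ψ t = π Polynomial.X := by
    rw [ht, map_sub, map_add, map_mul, map_mul, AlgHom.commutes, AlgHom.commutes, hψx, hψy,
      hψι, ← AlgHom.commutes π, ← AlgHom.commutes π, ← map_mul, ← map_mul, ← map_add,
      ← map_sub, hX]
  have hψφ : ψ.comp φ = π := by
    apply Polynomial.algHom_ext'
    · apply Polynomial.algHom_ext'
      · ext r : 1
        exact (congrArg ψ (hφι r)).trans (hψι r)
      · exact (congrArg ψ hφA).trans hψa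
    · exact (congrArg ψ hφX).trans hψt
  constructor
  · exact AlgHom.range_eq_top φ |>.1 <| top_le_iff.1 <|
      hgen _ (fun r ↦ ⟨ι r, hφι r⟩) ⟨xq, hφxq⟩ ⟨yq, hφyq⟩
  · apply le_antisymm
    · intro f hf
      have hf0 : φ f = 0 := hf
      have : π f = 0 := by
        rw [← hψφ, AlgHom.comp_apply, hf0, map_zero]
      exact Ideal.Quotient.eq_zero_iff_mem.1 this
    · rw [Ideal.span_singleton_le_iff_mem]
      change φ (whiskerRelation l m) = 0
      rw [hW, map_sub, map_mul, map_mul, hφι, hφι, hφA, hφB, ht, ha, hm, hl]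
      simp only [map_add, map_mul, AlgHom.commutes]
      linear_combination (i x * y' - x' * i y) * hdet' R' + hedge

end WhiskerPresentation

section CohenMacaulayCriterion

lemma gradedMaxQuot_ne_top {K σ : Type*} [Field K] {J : Ideal (MvPolynomial σ K)}
    (hJ : J ≤ RingHom.ker (constantCoeff (σ := σ) (R := K))) : gradedMaxQuot J ≠ ⊤ := by
  let f : MvPolynomial σ K ⧸ J →+* K := Ideal.Quotient.lift J constantCoeff fun a ha ↦ hJ ha
  have h : gradedMaxQuot J ≤ RingHom.ker f := by
    rw [gradedMaxQuot, Ideal.map_span, Ideal.span_le]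
    rintro _ ⟨_, ⟨i, rfl⟩, rfl⟩
    exact (Ideal.Quotient.lift_mk _ _ _).trans (by simp)
  intro htop
  rw [htop, top_le_iff] at h
  exact RingHom.ker_ne_top f h

lemma isCMQuot_of_isPermutableRegular {K σ ι : Type*} [Field K] [Finite σ] [Fintype ι]
    {J : Ideal (MvPolynomial σ K)} (hJ : J ≤ RingHom.ker (constantCoeff (σ := σ) (R := K)))
    {w : ι → MvPolynomial σ K ⧸ J} (hw : IsPermutableRegular w)
    (hmem : ∀ i, w i ∈ gradedMaxQuot J)
    (hdim : ringKrullDim (MvPolynomial σ K ⧸ J) ≤ Fintype.card ι) : IsCMQuot J := by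
  have hreg : RingTheory.Sequence.IsRegular (MvPolynomial σ K ⧸ J)
      (Finset.univ.toList.map w) :=
    hw.isRegular_map _ (Finset.nodup_toList _) fun htop ↦ gradedMaxQuot_ne_top hJ <| by
      rw [eq_top_iff, ← htop, Ideal.span_le]
      rintro _ ⟨i, rfl⟩
      exact hmem i
  have hle : ∀ l : List (MvPolynomial σ K ⧸ J),
      RingTheory.Sequence.IsRegular (MvPolynomial σ K ⧸ J) l →
      (l.length : WithBot ℕ∞) ≤ ringKrullDim (MvPolynomial σ K ⧸ J) := by
    intro l hl
    rw [← Module.supportDim_self_eq_ringKrullDim]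
    exact length_le_supportDim_of_isRegular l hl
  have hdepth : ringDepth (MvPolynomial σ K ⧸ J) (gradedMaxQuot J) = Fintype.card ι := by
    apply le_antisymm
    · refine sSup_le ?_
      rintro _ ⟨l, rfl, -, hl⟩
      exact_mod_cast (hle l hl).trans hdim
    · refine le_sSup ⟨_, by simp, ?_, hreg⟩
      simpa using hmem
  refine le_antisymm ?_ ?_
  · rw [hdepth]
    simpa using hle _ hreg
  · rw [hdepth]
    exact_mod_cast hdim

end CohenMacaulayCriterion

section Whisker

/-- The quotient of the polynomial ring by the binomial edge ideal. -/
abbrev EdgeRing (K : Type*) [Field K] {V : Type*} (G : SimpleGraph V) : Type _ :=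
  MvPolynomial (V ⊕ V) K ⧸ binomialEdgeIdeal K G

variable (K : Type*) {V V' : Type} {G' : SimpleGraph V'} (G : SimpleGraph V) [Field K]

/-- The class of the variable `x_v`. -/
def edgeX (v : V) : EdgeRing K G := Ideal.Quotient.mk _ (X (Sum.inl v))

/-- The class of the variable `y_v`. -/
def edgeY (v : V) : EdgeRing K G := Ideal.Quotient.mk _ (X (Sum.inr v))

variable {K G}

lemma edge_relation {i j : V} (h : G.Adj i j) :
    edgeX K G i * edgeY K G j = edgeX K G j * edgeY K G i := by
  rw [← sub_eq_zero]
  exact Ideal.Quotient.eq_zero_iff_mem.2 (Ideal.subset_span ⟨i, j, h, rfl⟩)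

variable (G) in
/-- The map out of the edge ring determined by the images of the variables. -/
def edgeLift {A : Type*} [CommRing A] [Algebra K A] (x y : V → A)
    (h : ∀ i j, G.Adj i j → x i * y j = x j * y i) : EdgeRing K G →ₐ[K] A :=
  Ideal.Quotient.liftₐ _ (aeval (Sum.elim x y)) fun a ha ↦ by
    rw [← RingHom.mem_ker]
    refine (Ideal.span_le (I := RingHom.ker (aeval (R := K) (Sum.elim x y)))).2 ?_ ha
    rintro _ ⟨i, j, hij, rfl⟩
    simp [h i j hij]

lemma edgeLift_edgeX {A : Type*} [CommRing A] [Algebra K A] (x y : V → A)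
    (h : ∀ i j, G.Adj i j → x i * y j = x j * y i) (v : V) :
    edgeLift G x y h (edgeX K G v) = x v := by
  exact (Ideal.Quotient.lift_mk _ _ _).trans (by simp)

lemma edgeLift_edgeY {A : Type*} [CommRing A] [Algebra K A] (x y : V → A)
    (h : ∀ i j, G.Adj i j → x i * y j = x j * y i) (v : V) :
    edgeLift G x y h (edgeY K G v) = y v := by
  exact (Ideal.Quotient.lift_mk _ _ _).trans (by simp)

lemma edgeRing_algHom_ext {A : Type*} [CommRing A] [Algebra K A] {f g : EdgeRing K G →ₐ[K] A}
    (hx : ∀ v, f (edgeX K G v) = g (edgeX K G v)) (hy : ∀ v, f (edgeY K G v) = g (edgeY K G v)) :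
    f = g := by
  apply Ideal.Quotient.algHom_ext
  apply MvPolynomial.algHom_ext
  rintro (v | v)
  · exact hx v
  · exact hy v

lemma top_le_of_forall_edge_mem {A : Subalgebra K (EdgeRing K G)}
    (hx : ∀ v, edgeX K G v ∈ A) (hy : ∀ v, edgeY K G v ∈ A) : ⊤ ≤ A := by
  rintro r -
  obtain ⟨f, rfl⟩ := Ideal.Quotient.mk_surjective r
  induction f using MvPolynomial.induction_on with
  | C k => exact A.algebraMap_mem k
  | add f g hf hg => rw [map_add]; exact A.add_mem hf hg
  | mul_X f v hf =>
    rw [map_mul]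
    refine A.mul_mem hf ?_
    rcases v with v | v
    · exact hx v
    · exact hy v

/-- `G'` is obtained from `G` by joining a new vertex `q` to the vertex `p`. -/
structure IsWhisker (G : SimpleGraph V) (G' : SimpleGraph V') (e : V → V') (p : V) (q : V') :
    Prop where
  injective : Function.Injective e
  ne : ∀ v, e v ≠ q
  cover : ∀ v', v' = q ∨ ∃ v, e v = v'
  adj : ∀ a b, G'.Adj (e a) (e b) ↔ G.Adj a b
  adj_new : ∀ a, G'.Adj (e a) q ↔ a = p

namespace IsWhisker

variable {e : V → V'} {p : V} {q : V'}

variable (K) in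
/-- The map of edge rings induced by adding a whisker. -/
def inclusion (h : IsWhisker G G' e p q) : EdgeRing K G →ₐ[K] EdgeRing K G' :=
  edgeLift G (fun v ↦ edgeX K G' (e v)) (fun v ↦ edgeY K G' (e v))
    fun i j hij ↦ edge_relation ((h.adj i j).2 hij)

lemma inclusion_edgeX (h : IsWhisker G G' e p q) (v : V) :
    h.inclusion K (edgeX K G v) = edgeX K G' (e v) := edgeLift_edgeX _ _ _ v

lemma inclusion_edgeY (h : IsWhisker G G' e p q) (v : V) :
    h.inclusion K (edgeY K G v) = edgeY K G' (e v) := edgeLift_edgeY _ _ _ v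

lemma inclusion_edge_relation (h : IsWhisker G G' e p q) :
    h.inclusion K (edgeX K G p) * edgeY K G' q = edgeX K G' q * h.inclusion K (edgeY K G p) := by
  rw [h.inclusion_edgeX, h.inclusion_edgeY, edge_relation ((h.adj_new p).2 rfl)]

/-- The edge ring of `G'` is the universal extension of the edge ring of `G` by two elements
satisfying the relation of the new edge. -/
lemma exists_lift (h : IsWhisker G G' e p q) {A : Type*} [CommRing A] [Algebra K A]
    (f : EdgeRing K G →ₐ[K] A) (x₀ y₀ : A)
    (hrel : f (edgeX K G p) * y₀ = x₀ * f (edgeY K G p)) :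
    ∃ ψ : EdgeRing K G' →ₐ[K] A, ψ.comp (h.inclusion K) = f ∧ ψ (edgeX K G' q) = x₀ ∧
      ψ (edgeY K G' q) = y₀ := by
  let x' : V' → A := Function.extend e (fun v ↦ f (edgeX K G v)) fun _ ↦ x₀
  let y' : V' → A := Function.extend e (fun v ↦ f (edgeY K G v)) fun _ ↦ y₀
  have hx'e : ∀ v, x' (e v) = f (edgeX K G v) := fun v ↦ h.injective.extend_apply _ _ v
  have hy'e : ∀ v, y' (e v) = f (edgeY K G v) := fun v ↦ h.injective.extend_apply _ _ v
  have hq : ¬ ∃ v, e v = q := fun ⟨v, hv⟩ ↦ h.ne v hv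
  have hx'q : x' q = x₀ := Function.extend_apply' _ _ _ hq
  have hy'q : y' q = y₀ := Function.extend_apply' _ _ _ hq
  have hrel' : ∀ i j, G'.Adj i j → x' i * y' j = x' j * y' i := by
    intro i j hij
    rcases h.cover i with rfl | ⟨i, rfl⟩ <;> rcases h.cover j with rfl | ⟨j, rfl⟩
    · exact absurd hij (G'.irrefl)
    · rw [(h.adj_new j).1 hij.symm, hx'e, hy'e, hx'q, hy'q, hrel]
    · rw [(h.adj_new i).1 hij, hx'e, hy'e, hx'q, hy'q, hrel]
    · rw [hx'e, hy'e, hx'e, hy'e, ← map_mul, ← map_mul, edge_relation ((h.adj i j).1 hij)]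
  refine ⟨edgeLift G' x' y' hrel', edgeRing_algHom_ext (fun v ↦ ?_) (fun v ↦ ?_), ?_, ?_⟩
  · rw [AlgHom.comp_apply, h.inclusion_edgeX, edgeLift_edgeX, hx'e]
  · rw [AlgHom.comp_apply, h.inclusion_edgeY, edgeLift_edgeY, hy'e]
  · rw [edgeLift_edgeX, hx'q]
  · rw [edgeLift_edgeY, hy'q]

lemma top_le_of_inclusion_mem (h : IsWhisker G G' e p q) {A : Subalgebra K (EdgeRing K G')}
    (hi : ∀ r, h.inclusion K r ∈ A) (hx : edgeX K G' q ∈ A) (hy : edgeY K G' q ∈ A) : ⊤ ≤ A := by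
  refine top_le_of_forall_edge_mem (fun v ↦ ?_) (fun v ↦ ?_)
  · rcases h.cover v with rfl | ⟨v, rfl⟩
    · exact hx
    · exact h.inclusion_edgeX (K := K) v ▸ hi _
  · rcases h.cover v with rfl | ⟨v, rfl⟩
    · exact hy
    · exact h.inclusion_edgeY (K := K) v ▸ hi _

end IsWhisker

/-- The edge ring of `G` has a permutable regular system of parameters containing a linear form in
`x_p, y_p` for each of the three marked vertices `p`. -/
def HasParameters (K : Type*) [Field K] (G : SimpleGraph V) (p : Fin 3 → V) : Prop :=
  ∃ (ι : Type) (_ : Fintype ι) (w : ι → EdgeRing K G) (j : Fin 3 → ι),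
    IsPermutableRegular w ∧ (∀ i, w i ∈ gradedMaxQuot (binomialEdgeIdeal K G)) ∧
    ringKrullDim (EdgeRing K G) ≤ Fintype.card ι ∧ Function.Injective j ∧
    ∀ k, ∃ α β γ δ : K, α * δ - β * γ = 1 ∧
      w (j k) = algebraMap K _ α * edgeX K G (p k) + algebraMap K _ β * edgeY K G (p k)

lemma edgeX_mem_gradedMaxQuot (v : V) : edgeX K G v ∈ gradedMaxQuot (binomialEdgeIdeal K G) :=
  Ideal.mem_map_of_mem _ (Ideal.subset_span ⟨_, rfl⟩)

lemma edgeY_mem_gradedMaxQuot (v : V) : edgeY K G v ∈ gradedMaxQuot (binomialEdgeIdeal K G) :=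
  Ideal.mem_map_of_mem _ (Ideal.subset_span ⟨_, rfl⟩)

lemma HasParameters.isCMQuot [Finite V] {p : Fin 3 → V} (h : HasParameters K G p) :
    IsCMQuot (binomialEdgeIdeal K G) := by
  obtain ⟨ι, _, w, j, hw, hmem, hdim, -, -⟩ := h
  refine isCMQuot_of_isPermutableRegular ?_ hw hmem hdim
  refine Ideal.span_le.2 ?_
  rintro _ ⟨i, j, -, rfl⟩
  simp

lemma IsWhisker.inclusion_mem_gradedMaxQuot {e : V → V'} {p : V} {q : V'}
    (h : IsWhisker G G' e p q) {r : EdgeRing K G}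
    (hr : r ∈ gradedMaxQuot (binomialEdgeIdeal K G)) :
    h.inclusion K r ∈ gradedMaxQuot (binomialEdgeIdeal K G') := by
  have hle : gradedMaxQuot (binomialEdgeIdeal K G) ≤
      (gradedMaxQuot (binomialEdgeIdeal K G')).comap (h.inclusion K) := by
    rw [gradedMaxQuot, Ideal.map_span, Ideal.span_le]
    rintro _ ⟨_, ⟨v | v, rfl⟩, rfl⟩
    · have : h.inclusion K (edgeX K G v) = edgeX K G' (e v) := edgeLift_edgeX _ _ _ v
      exact Ideal.mem_comap.2 (this ▸ edgeX_mem_gradedMaxQuot (e v))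
    · have : h.inclusion K (edgeY K G v) = edgeY K G' (e v) := edgeLift_edgeY _ _ _ v
      exact Ideal.mem_comap.2 (this ▸ edgeY_mem_gradedMaxQuot (e v))
  exact hle hr

lemma HasParameters.whisker [Finite V] {p : Fin 3 → V} {e : V → V'} {q : V'} {k₀ : Fin 3}
    (hp : HasParameters K G p) (h : IsWhisker G G' e (p k₀) q) :
    HasParameters K G' (Function.update (e ∘ p) k₀ q) := by
  classical
  obtain ⟨ι, _, w, j, hw, hmem, hdim, hj, hlin⟩ := hp
  obtain ⟨α, β, γ, δ, hdet, hl⟩ := hlin k₀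
  obtain ⟨hsurj, hker⟩ := whiskerPresentation_surjective_and_ker
    (h.inclusion_edge_relation (K := K)) (fun A _ _ ↦ h.exists_lift)
    (fun A ↦ h.top_le_of_inclusion_mem) hdet hl rfl rfl rfl
  set a := algebraMap K _ α * edgeX K G' q + algebraMap K _ β * edgeY K G' q with ha
  set t := algebraMap K _ γ * edgeX K G' q + algebraMap K _ δ * edgeY K G' q -
    h.inclusion K (w (j k₀)) with ht
  set m := algebraMap K _ γ * edgeX K G (p k₀) + algebraMap K _ δ * edgeY K G (p k₀)
  let w' : Option ι → EdgeRing K G' := (whiskerPresentation (h.inclusion K) a t : _ →+* _) ∘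
    adjoinVariable (adjoinVariable w) ∘ whiskerIndex (j k₀)
  have hnone : w' none = t := whiskerPresentation_X (h.inclusion K) a t
  have hsome₀ : w' (some (j k₀)) = a := by
    simpa [w', whiskerIndex, adjoinVariable] using whiskerPresentation_C_X (h.inclusion K) a t
  have hsome : ∀ i, i ≠ j k₀ → w' (some i) = h.inclusion K (w i) := by
    intro i hi
    simpa [w', whiskerIndex, adjoinVariable, hi] using
      whiskerPresentation_C_C (h.inclusion K) a t (w i)
  have hx := edgeX_mem_gradedMaxQuot (K := K) (G := G') q
  have hy := edgeY_mem_gradedMaxQuot (K := K) (G := G') q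
  refine ⟨Option ι, inferInstance, w', fun k ↦ some (j k), hw.whisker (j k₀) m hsurj hker, ?_, ?_,
    (Option.some_injective _).comp hj, fun k ↦ ?_⟩
  · rintro (_ | i)
    · rw [hnone]
      exact Ideal.sub_mem _ (Ideal.add_mem _ (Ideal.mul_mem_left _ _ hx)
        (Ideal.mul_mem_left _ _ hy)) (h.inclusion_mem_gradedMaxQuot (hmem _))
    · by_cases hi : i = j k₀
      · rw [hi, hsome₀]
        exact Ideal.add_mem _ (Ideal.mul_mem_left _ _ hx) (Ideal.mul_mem_left _ _ hy)
      · rw [hsome i hi]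
        exact h.inclusion_mem_gradedMaxQuot (hmem _)
  · rw [Fintype.card_option]
    refine ringKrullDim_whisker_le hw (j k₀) m hsurj ?_ hdim
    exact RingHom.mem_ker.1 (hker ▸ Ideal.mem_span_singleton_self _)
  · by_cases hk : k = k₀
    · subst hk
      exact ⟨α, β, γ, δ, hdet, by simp [hsome₀, ha]⟩
    · obtain ⟨α', β', γ', δ', hdet', hl'⟩ := hlin k
      refine ⟨α', β', γ', δ', hdet', ?_⟩
      rw [hsome _ (hj.ne hk), hl', Function.update_of_ne hk]
      simp only [map_add, map_mul, AlgHom.commutes]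
      congr 2
      · exact edgeLift_edgeX _ _ _ _
      · exact edgeLift_edgeY _ _ _ _

end Whisker

section Triangle

/-- The free algebra of rank three over `A` with basis `1, e₁, e₂` and multiplication determined by
`e₁ e₂ = t₀ t₂ - t₀ e₂`, `e₁² = -t₀ t₁ - t₀ t₂ + t₃ e₁ + t₀ e₂` and
`e₂² = -t₂ t₃ - t₀ t₂ + t₂ e₁ + (t₀ + t₁ + t₂ + t₃) e₂`. -/
@[ext]
structure TriangleAlgebra {A : Type*} (t : Fin 4 → A) where
  /-- The coefficient of `1`. -/
  c₀ : A
  /-- The coefficient of `e₁`. -/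
  c₁ : A
  /-- The coefficient of `e₂`. -/
  c₂ : A

namespace TriangleAlgebra

variable {A : Type*} [CommRing A] {t : Fin 4 → A}

instance : Zero (TriangleAlgebra t) := ⟨⟨0, 0, 0⟩⟩
instance : One (TriangleAlgebra t) := ⟨⟨1, 0, 0⟩⟩
instance : Add (TriangleAlgebra t) := ⟨fun a b ↦ ⟨a.c₀ + b.c₀, a.c₁ + b.c₁, a.c₂ + b.c₂⟩⟩
instance : Neg (TriangleAlgebra t) := ⟨fun a ↦ ⟨-a.c₀, -a.c₁, -a.c₂⟩⟩
instance : Mul (TriangleAlgebra t) := ⟨fun a b ↦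
  ⟨a.c₀ * b.c₀ + (a.c₁ * b.c₂ + a.c₂ * b.c₁) * (t 0 * t 2) -
      a.c₁ * b.c₁ * (t 0 * t 1 + t 0 * t 2) - a.c₂ * b.c₂ * (t 2 * t 3 + t 0 * t 2),
    a.c₀ * b.c₁ + a.c₁ * b.c₀ + a.c₁ * b.c₁ * t 3 + a.c₂ * b.c₂ * t 2,
    a.c₀ * b.c₂ + a.c₂ * b.c₀ - (a.c₁ * b.c₂ + a.c₂ * b.c₁) * t 0 + a.c₁ * b.c₁ * t 0 +
      a.c₂ * b.c₂ * (t 0 + t 1 + t 2 + t 3)⟩⟩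

@[simp] lemma c₀_zero : (0 : TriangleAlgebra t).c₀ = 0 := rfl
@[simp] lemma c₁_zero : (0 : TriangleAlgebra t).c₁ = 0 := rfl
@[simp] lemma c₂_zero : (0 : TriangleAlgebra t).c₂ = 0 := rfl
@[simp] lemma c₀_one : (1 : TriangleAlgebra t).c₀ = 1 := rfl
@[simp] lemma c₁_one : (1 : TriangleAlgebra t).c₁ = 0 := rfl
@[simp] lemma c₂_one : (1 : TriangleAlgebra t).c₂ = 0 := rfl
@[simp] lemma c₀_add (a b : TriangleAlgebra t) : (a + b).c₀ = a.c₀ + b.c₀ := rfl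
@[simp] lemma c₁_add (a b : TriangleAlgebra t) : (a + b).c₁ = a.c₁ + b.c₁ := rfl
@[simp] lemma c₂_add (a b : TriangleAlgebra t) : (a + b).c₂ = a.c₂ + b.c₂ := rfl
@[simp] lemma c₀_neg (a : TriangleAlgebra t) : (-a).c₀ = -a.c₀ := rfl
@[simp] lemma c₁_neg (a : TriangleAlgebra t) : (-a).c₁ = -a.c₁ := rfl
@[simp] lemma c₂_neg (a : TriangleAlgebra t) : (-a).c₂ = -a.c₂ := rfl
@[simp] lemma c₀_mul (a b : TriangleAlgebra t) : (a * b).c₀ =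
    a.c₀ * b.c₀ + (a.c₁ * b.c₂ + a.c₂ * b.c₁) * (t 0 * t 2) -
      a.c₁ * b.c₁ * (t 0 * t 1 + t 0 * t 2) - a.c₂ * b.c₂ * (t 2 * t 3 + t 0 * t 2) := rfl
@[simp] lemma c₁_mul (a b : TriangleAlgebra t) : (a * b).c₁ =
    a.c₀ * b.c₁ + a.c₁ * b.c₀ + a.c₁ * b.c₁ * t 3 + a.c₂ * b.c₂ * t 2 := rfl
@[simp] lemma c₂_mul (a b : TriangleAlgebra t) : (a * b).c₂ =
    a.c₀ * b.c₂ + a.c₂ * b.c₀ - (a.c₁ * b.c₂ + a.c₂ * b.c₁) * t 0 + a.c₁ * b.c₁ * t 0 +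
      a.c₂ * b.c₂ * (t 0 + t 1 + t 2 + t 3) := rfl

instance : CommRing (TriangleAlgebra t) where
  add_assoc a b c := by ext <;> simp [add_assoc]
  zero_add a := by ext <;> simp
  add_zero a := by ext <;> simp
  add_comm a b := by ext <;> simp [add_comm]
  neg_add_cancel a := by ext <;> simp
  mul_assoc a b c := by ext <;> simp only [c₀_mul, c₁_mul, c₂_mul] <;> ring
  mul_comm a b := by ext <;> simp only [c₀_mul, c₁_mul, c₂_mul] <;> ring
  one_mul a := by ext <;> simp
  mul_one a := by ext <;> simp
  left_distrib a b c := by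
    ext <;> simp only [c₀_mul, c₁_mul, c₂_mul, c₀_add, c₁_add, c₂_add] <;> ring
  right_distrib a b c := by
    ext <;> simp only [c₀_mul, c₁_mul, c₂_mul, c₀_add, c₁_add, c₂_add] <;> ring
  zero_mul a := by ext <;> simp
  mul_zero a := by ext <;> simp
  nsmul := nsmulRec
  zsmul := zsmulRec

@[simp] lemma c₀_sub (a b : TriangleAlgebra t) : (a - b).c₀ = a.c₀ - b.c₀ := by
  simp [sub_eq_add_neg]
@[simp] lemma c₁_sub (a b : TriangleAlgebra t) : (a - b).c₁ = a.c₁ - b.c₁ := by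
  simp [sub_eq_add_neg]
@[simp] lemma c₂_sub (a b : TriangleAlgebra t) : (a - b).c₂ = a.c₂ - b.c₂ := by
  simp [sub_eq_add_neg]

instance {k : Type*} [CommRing k] [Algebra k A] : Algebra k (TriangleAlgebra t) where
  smul r a := ⟨r • a.c₀, r • a.c₁, r • a.c₂⟩
  algebraMap :=
    { toFun r := ⟨algebraMap k A r, 0, 0⟩
      map_one' := by ext <;> simp
      map_zero' := by ext <;> simp
      map_add' _ _ := by ext <;> simp
      map_mul' _ _ := by ext <;> simp }
  commutes' _ _ := mul_comm _ _
  smul_def' r a := by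
    change (⟨r • a.c₀, r • a.c₁, r • a.c₂⟩ : TriangleAlgebra t) = ⟨algebraMap k A r, 0, 0⟩ * a
    ext <;> simp [Algebra.smul_def]

section AlgebraMap

variable {k : Type*} [CommRing k] [Algebra k A] (r : k)

@[simp] lemma c₀_algebraMap : (algebraMap k (TriangleAlgebra t) r).c₀ = algebraMap k A r := rfl
@[simp] lemma c₁_algebraMap : (algebraMap k (TriangleAlgebra t) r).c₁ = 0 := rfl
@[simp] lemma c₂_algebraMap : (algebraMap k (TriangleAlgebra t) r).c₂ = 0 := rfl

instance : IsScalarTower k A (TriangleAlgebra t) :=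
  IsScalarTower.of_algebraMap_eq fun _ ↦ rfl

end AlgebraMap

variable (t) in
/-- The second basis element. -/
def e₁ : TriangleAlgebra t := ⟨0, 1, 0⟩

variable (t) in
/-- The third basis element. -/
def e₂ : TriangleAlgebra t := ⟨0, 0, 1⟩

@[simp] lemma c₀_e₁ : (e₁ t).c₀ = 0 := rfl
@[simp] lemma c₁_e₁ : (e₁ t).c₁ = 1 := rfl
@[simp] lemma c₂_e₁ : (e₁ t).c₂ = 0 := rfl
@[simp] lemma c₀_e₂ : (e₂ t).c₀ = 0 := rfl
@[simp] lemma c₁_e₂ : (e₂ t).c₁ = 0 := rfl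
@[simp] lemma c₂_e₂ : (e₂ t).c₂ = 1 := rfl

lemma relation_fst_snd : algebraMap A (TriangleAlgebra t) (t 0) * algebraMap A _ (t 1) =
    (algebraMap A _ (t 3) - e₁ t - e₂ t) * e₁ t := by
  ext <;> simp

lemma relation_fst_trd : algebraMap A (TriangleAlgebra t) (t 0) * (algebraMap A _ (t 2) - e₂ t) =
    e₂ t * e₁ t := by
  ext <;> simp

lemma relation_snd_trd : (algebraMap A (TriangleAlgebra t) (t 3) - e₁ t - e₂ t) *
    (algebraMap A _ (t 2) - e₂ t) = e₂ t * algebraMap A _ (t 1) := by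
  ext <;> simp <;> ring

lemma eq_combination (a : TriangleAlgebra t) :
    algebraMap A _ a.c₀ + algebraMap A _ a.c₁ * e₁ t + algebraMap A _ a.c₂ * e₂ t = a := by
  ext <;> simp

instance : Module.Finite A (TriangleAlgebra t) :=
  Module.Finite.of_surjective
    ((Algebra.linearMap A (TriangleAlgebra t)).coprod
      ((LinearMap.toSpanSingleton A _ (e₁ t)).coprod (LinearMap.toSpanSingleton A _ (e₂ t))))
    fun a ↦ ⟨(a.c₀, a.c₁, a.c₂), by
      simpa [Algebra.smul_def, add_assoc] using eq_combination a⟩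

lemma mem_map_algebraMap_iff {I : Ideal A} {a : TriangleAlgebra t} :
    a ∈ I.map (algebraMap A (TriangleAlgebra t)) ↔ a.c₀ ∈ I ∧ a.c₁ ∈ I ∧ a.c₂ ∈ I := by
  constructor
  · let J : Ideal (TriangleAlgebra t) :=
      { carrier := {a | a.c₀ ∈ I ∧ a.c₁ ∈ I ∧ a.c₂ ∈ I}
        zero_mem' := by simp
        add_mem' := fun ha hb ↦ ⟨I.add_mem ha.1 hb.1, I.add_mem ha.2.1 hb.2.1,
          I.add_mem ha.2.2 hb.2.2⟩
        smul_mem' := by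
          rintro b a ⟨h₀, h₁, h₂⟩
          simp only [smul_eq_mul, Set.mem_ofPred_eq, c₀_mul, c₁_mul, c₂_mul,
            ← Ideal.Quotient.eq_zero_iff_mem, map_add, map_sub, map_mul] at h₀ h₁ h₂ ⊢
          simp [h₀, h₁, h₂] }
    have h : I.map (algebraMap A (TriangleAlgebra t)) ≤ J :=
      Ideal.map_le_iff_le_comap.2 fun r hr ↦ ⟨hr, I.zero_mem, I.zero_mem⟩
    exact fun ha ↦ h ha
  · rintro ⟨h₀, h₁, h₂⟩
    rw [← eq_combination a]
    exact Ideal.add_mem _ (Ideal.add_mem _ (Ideal.mem_map_of_mem _ h₀)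
      (Ideal.mul_mem_right _ _ (Ideal.mem_map_of_mem _ h₁)))
      (Ideal.mul_mem_right _ _ (Ideal.mem_map_of_mem _ h₂))

lemma isPermutableRegular_algebraMap {ι : Type*} {w : ι → A} (hw : IsPermutableRegular w) :
    IsPermutableRegular (algebraMap A (TriangleAlgebra t) ∘ w) := by
  intro T i hi a ha
  rw [Set.image_comp, ← Ideal.map_span, mem_map_algebraMap_iff] at ha ⊢
  simp only [Function.comp_apply, c₀_mul, c₁_mul, c₂_mul, c₀_algebraMap, c₁_algebraMap,
    c₂_algebraMap, zero_mul, add_zero, sub_zero, Algebra.algebraMap_self, RingHom.id_apply] at ha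
  exact ⟨hw T i hi _ ha.1, hw T i hi _ ha.2.1, hw T i hi _ ha.2.2⟩

/-- The map out of the triangle algebra determined by the images of the basis elements. -/
def lift {B : Type*} [CommRing B] (f : A →+* B) (y z : B)
    (hyz : y * z = f (t 0) * f (t 2) - f (t 0) * z)
    (hy : y * y = -(f (t 0) * f (t 1)) - f (t 0) * f (t 2) + f (t 3) * y + f (t 0) * z)
    (hz : z * z = -(f (t 2) * f (t 3)) - f (t 0) * f (t 2) + f (t 2) * y +
      (f (t 0) + f (t 1) + f (t 2) + f (t 3)) * z) : TriangleAlgebra t →+* B where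
  toFun a := f a.c₀ + f a.c₁ * y + f a.c₂ * z
  map_one' := by simp
  map_zero' := by simp
  map_add' a b := by simp only [c₀_add, c₁_add, c₂_add, map_add]; ring
  map_mul' a b := by
    simp only [c₀_mul, c₁_mul, c₂_mul, map_add, map_sub, map_mul]
    linear_combination -(f a.c₁ * f b.c₂ + f a.c₂ * f b.c₁) * hyz - f a.c₁ * f b.c₁ * hy -
      f a.c₂ * f b.c₂ * hz

end TriangleAlgebra

end Triangle

section GraphFamily

lemma ne_of_adj_graphG3 {r s t : ℕ} {i j : Fin r ⊕ (Fin s ⊕ Fin t)}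
    (h : (graphG3 r s t).Adj i j) : i ≠ j := h.1

/-- The tips of the three paths of a graph in the family `𝒢₃`. -/
def graphG3Tips (r s t : ℕ) : Fin 3 → Fin (r + 1) ⊕ (Fin (s + 1) ⊕ Fin (t + 1)) :=
  ![Sum.inl (Fin.last r), Sum.inr (Sum.inl (Fin.last s)), Sum.inr (Sum.inr (Fin.last t))]

lemma hasParameters_triangle (K : Type*) [Field K] :
    HasParameters K (graphG3 1 1 1) (graphG3Tips 0 0 0) := by
  let x₁ := edgeX K (graphG3 1 1 1) (Sum.inl 0)
  let y₁ := edgeY K (graphG3 1 1 1) (Sum.inl 0)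
  let x₂ := edgeX K (graphG3 1 1 1) (Sum.inr (Sum.inl 0))
  let y₂ := edgeY K (graphG3 1 1 1) (Sum.inr (Sum.inl 0))
  let x₃ := edgeX K (graphG3 1 1 1) (Sum.inr (Sum.inr 0))
  let y₃ := edgeY K (graphG3 1 1 1) (Sum.inr (Sum.inr 0))
  have h₁₂ : x₁ * y₂ = x₂ * y₁ := edge_relation (by simp [graphG3, g3Rel])
  have h₁₃ : x₁ * y₃ = x₃ * y₁ := edge_relation (by simp [graphG3, g3Rel])
  have h₂₃ : x₂ * y₃ = x₃ * y₂ := edge_relation (by simp [graphG3, g3Rel])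
  let w : Fin 4 → EdgeRing K (graphG3 1 1 1) := ![x₁, y₂, x₃ + y₃, x₂ + y₁ + x₃]
  let A := MvPolynomial (Fin 4) K
  let T := TriangleAlgebra (X : Fin 4 → A)
  let θ : A →ₐ[K] EdgeRing K (graphG3 1 1 1) := aeval w
  have hθ₀ : θ (X 0) = x₁ := aeval_X w 0
  have hθ₁ : θ (X 1) = y₂ := aeval_X w 1
  have hθ₂ : θ (X 2) = x₃ + y₃ := aeval_X w 2
  have hθ₃ : θ (X 3) = x₂ + y₁ + x₃ := aeval_X w 3
  let σ : T →+* EdgeRing K (graphG3 1 1 1) := TriangleAlgebra.lift (θ : A →+* _) y₁ x₃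
    (by
      simp only [RingHom.coe_coe, hθ₀, hθ₂]
      linear_combination -h₁₃)
    (by
      simp only [RingHom.coe_coe, hθ₀, hθ₁, hθ₂, hθ₃]
      linear_combination h₁₂ + h₁₃)
    (by
      simp only [RingHom.coe_coe, hθ₀, hθ₁, hθ₂, hθ₃]
      linear_combination h₂₃ + h₁₃)
  let ξ : Fin 4 → T := fun i ↦ algebraMap A T (X i)
  let e₁ : T := TriangleAlgebra.e₁ _
  let e₂ : T := TriangleAlgebra.e₂ _
  let ρ : EdgeRing K (graphG3 1 1 1) →ₐ[K] T := edgeLift _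
    (Sum.elim (fun _ ↦ ξ 0) (Sum.elim (fun _ ↦ ξ 3 - e₁ - e₂) fun _ ↦ e₂))
    (Sum.elim (fun _ ↦ e₁) (Sum.elim (fun _ ↦ ξ 1) fun _ ↦ ξ 2 - e₂)) (by
      have h₁₂ : ξ 0 * ξ 1 = (ξ 3 - e₁ - e₂) * e₁ := TriangleAlgebra.relation_fst_snd
      have h₁₃ : ξ 0 * (ξ 2 - e₂) = e₂ * e₁ := TriangleAlgebra.relation_fst_trd
      have h₂₃ : (ξ 3 - e₁ - e₂) * (ξ 2 - e₂) = e₂ * ξ 1 := TriangleAlgebra.relation_snd_trd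
      rintro (i | i | i) (j | j | j) h <;> obtain rfl := Subsingleton.elim i j
      · exact absurd rfl (ne_of_adj_graphG3 h)
      · exact h₁₂
      · exact h₁₃
      · exact h₁₂.symm
      · exact absurd rfl (ne_of_adj_graphG3 h)
      · exact h₂₃
      · exact h₁₃.symm
      · exact h₂₃.symm
      · exact absurd rfl (ne_of_adj_graphG3 h))
  have hρx₁ : ρ x₁ = ξ 0 := edgeLift_edgeX _ _ _ _
  have hρy₁ : ρ y₁ = e₁ := edgeLift_edgeY _ _ _ _
  have hρx₂ : ρ x₂ = ξ 3 - e₁ - e₂ := edgeLift_edgeX _ _ _ _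
  have hρy₂ : ρ y₂ = ξ 1 := edgeLift_edgeY _ _ _ _
  have hρx₃ : ρ x₃ = e₂ := edgeLift_edgeX _ _ _ _
  have hρy₃ : ρ y₃ = ξ 2 - e₂ := edgeLift_edgeY _ _ _ _
  have hρθ : ρ.comp θ = IsScalarTower.toAlgHom K A T := by
    apply MvPolynomial.algHom_ext
    intro i
    change ρ (θ (X i)) = ξ i
    fin_cases i
    · exact (congrArg ρ hθ₀).trans hρx₁
    · exact (congrArg ρ hθ₁).trans hρy₂
    · refine (congrArg ρ hθ₂).trans ?_
      rw [map_add, hρx₃, hρy₃, add_sub_cancel]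
      rfl
    · refine (congrArg ρ hθ₃).trans ?_
      rw [map_add, map_add, hρx₂, hρy₁, hρx₃, sub_right_comm, sub_add_cancel, sub_add_cancel]
      rfl
  have hρθ' (r : A) : ρ (θ r) = algebraMap A T r := DFunLike.congr_fun hρθ r
  have hσ (a : T) : σ a = θ a.c₀ + θ a.c₁ * y₁ + θ a.c₂ * x₃ := rfl
  have hρσ (a : T) : ρ (σ a) = a := by
    rw [hσ, map_add, map_add, map_mul, map_mul, hρθ', hρθ', hρθ', hρy₁, hρx₃]
    exact a.eq_combination
  have hσA (r : A) : σ (algebraMap A T r) = θ r := by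
    change θ r + θ 0 * y₁ + θ 0 * x₃ = θ r
    simp
  have hσξ (i : Fin 4) : σ (ξ i) = w i := (hσA _).trans (aeval_X w i)
  have hσe₁ : σ e₁ = y₁ := by simp [hσ, e₁]
  have hσe₂ : σ e₂ = x₃ := by simp [hσ, e₂]
  let σK : T →ₐ[K] EdgeRing K (graphG3 1 1 1) :=
    { σ with
      commutes' := fun k ↦ (hσA (algebraMap K A k)).trans (θ.commutes k) }
  have hsurj : Function.Surjective σ := by
    refine AlgHom.range_eq_top σK |>.1 (top_le_iff.1 (top_le_of_forall_edge_mem ?_ ?_))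
    · rintro (i | i | i) <;> rw [Subsingleton.elim i 0]
      · exact ⟨ξ 0, hσξ 0⟩
      · refine ⟨ξ 3 - e₁ - e₂, ?_⟩
        change σ _ = x₂
        rw [map_sub, map_sub, hσξ, hσe₁, hσe₂]
        change x₂ + y₁ + x₃ - y₁ - x₃ = x₂
        ring
      · exact ⟨e₂, hσe₂⟩
    · rintro (i | i | i) <;> rw [Subsingleton.elim i 0]
      · exact ⟨e₁, hσe₁⟩
      · exact ⟨ξ 1, hσξ 1⟩
      · refine ⟨ξ 2 - e₂, ?_⟩
        change σ _ = y₃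
        rw [map_sub, hσξ, hσe₂]
        simp [w]
  have hw : σ ∘ algebraMap A T ∘ X = w := funext hσξ
  refine ⟨Fin 4, inferInstance, w, Fin.castSucc, ?_, ?_, ?_, Fin.castSucc_injective 3, ?_⟩
  · rw [← hw]
    exact (TriangleAlgebra.isPermutableRegular_algebraMap
      (isPermutableRegular_X K (Fin 4))).map_of_bijective
        ⟨Function.LeftInverse.injective hρσ, hsurj⟩
  · intro i
    fin_cases i
    · exact edgeX_mem_gradedMaxQuot _
    · exact edgeY_mem_gradedMaxQuot _
    · exact Ideal.add_mem _ (edgeX_mem_gradedMaxQuot _) (edgeY_mem_gradedMaxQuot _)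
    · exact Ideal.add_mem _ (Ideal.add_mem _ (edgeX_mem_gradedMaxQuot _)
        (edgeY_mem_gradedMaxQuot _)) (edgeX_mem_gradedMaxQuot _)
  · refine (ringKrullDim_le_of_surjective σ hsurj).trans ?_
    refine (ringKrullDim_le_of_isIntegral A T).trans ?_
    rw [MvPolynomial.ringKrullDim_of_isNoetherianRing]
    simp
  · intro k
    fin_cases k
    · exact ⟨1, 0, 0, 1, by simp, by simp [w, graphG3Tips, x₁]⟩
    · exact ⟨0, 1, -1, 0, by simp, by simp [w, graphG3Tips, y₂]⟩
    · exact ⟨1, 1, 0, 1, by simp, by simp [w, graphG3Tips, x₃, y₃]⟩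

lemma isWhisker_graphG3_left (r s t : ℕ) :
    IsWhisker (graphG3 (r + 1) (s + 1) (t + 1)) (graphG3 (r + 1 + 1) (s + 1) (t + 1))
      (Sum.map Fin.castSucc id) (graphG3Tips r s t 0) (Sum.inl (Fin.last (r + 1))) where
  injective := Sum.map_injective.2 ⟨Fin.castSucc_injective _, Function.injective_id⟩
  ne := by
    rintro (v | v | v) <;> simp
  cover := by
    rintro (v | v)
    · refine v.lastCases (Or.inl rfl) fun v ↦ Or.inr ⟨Sum.inl v, rfl⟩
    · exact Or.inr ⟨Sum.inr v, rfl⟩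
  adj := by
    rintro (a | a | a) (b | b | b) <;> simp [graphG3, g3Rel]
  adj_new := by
    rintro (a | a | a) <;> simp [graphG3, g3Rel, graphG3Tips]
    rw [Fin.ext_iff, Fin.val_last]
    omega

lemma isWhisker_graphG3_middle (r s t : ℕ) :
    IsWhisker (graphG3 (r + 1) (s + 1) (t + 1)) (graphG3 (r + 1) (s + 1 + 1) (t + 1))
      (Sum.map id (Sum.map Fin.castSucc id)) (graphG3Tips r s t 1)
      (Sum.inr (Sum.inl (Fin.last (s + 1)))) where
  injective := Sum.map_injective.2 ⟨Function.injective_id,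
    Sum.map_injective.2 ⟨Fin.castSucc_injective _, Function.injective_id⟩⟩
  ne := by
    rintro (v | v | v) <;> simp
  cover := by
    rintro (v | v | v)
    · exact Or.inr ⟨Sum.inl v, rfl⟩
    · refine v.lastCases (Or.inl rfl) fun v ↦ Or.inr ⟨Sum.inr (Sum.inl v), rfl⟩
    · exact Or.inr ⟨Sum.inr (Sum.inr v), rfl⟩
  adj := by
    rintro (a | a | a) (b | b | b) <;> simp [graphG3, g3Rel]
  adj_new := by
    rintro (a | a | a) <;> simp [graphG3, g3Rel, graphG3Tips]
    rw [Fin.ext_iff, Fin.val_last]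
    omega

lemma isWhisker_graphG3_right (r s t : ℕ) :
    IsWhisker (graphG3 (r + 1) (s + 1) (t + 1)) (graphG3 (r + 1) (s + 1) (t + 1 + 1))
      (Sum.map id (Sum.map id Fin.castSucc)) (graphG3Tips r s t 2)
      (Sum.inr (Sum.inr (Fin.last (t + 1)))) where
  injective := Sum.map_injective.2 ⟨Function.injective_id,
    Sum.map_injective.2 ⟨Function.injective_id, Fin.castSucc_injective _⟩⟩
  ne := by
    rintro (v | v | v) <;> simp
  cover := by
    rintro (v | v | v)
    · exact Or.inr ⟨Sum.inl v, rfl⟩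
    · exact Or.inr ⟨Sum.inr (Sum.inl v), rfl⟩
    · refine v.lastCases (Or.inl rfl) fun v ↦ Or.inr ⟨Sum.inr (Sum.inr v), rfl⟩
  adj := by
    rintro (a | a | a) (b | b | b) <;> simp [graphG3, g3Rel]
  adj_new := by
    rintro (a | a | a) <;> simp [graphG3, g3Rel, graphG3Tips]
    rw [Fin.ext_iff, Fin.val_last]
    omega

lemma hasParameters_graphG3 (K : Type*) [Field K] (r s t : ℕ) :
    HasParameters K (graphG3 (r + 1) (s + 1) (t + 1)) (graphG3Tips r s t) := by
  induction r with
  | succ r ih =>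
    convert ih.whisker (isWhisker_graphG3_left r s t) using 1
    ext k
    fin_cases k <;> simp [graphG3Tips]
  | zero =>
    induction s with
    | succ s ih =>
      convert ih.whisker (isWhisker_graphG3_middle 0 s t) using 1
      ext k
      fin_cases k <;> simp [graphG3Tips]
    | zero =>
      induction t with
      | succ t ih =>
        convert ih.whisker (isWhisker_graphG3_right 0 0 t) using 1
        ext k
        fin_cases k <;> simp [graphG3Tips]
      | zero => exact hasParameters_triangle K

end GraphFamily

/-- For every graph `G` in the family `𝒢₃` (three paths of lengths
`r, s, t ≥ 1` attached to a triangle), the quotient `S/J_G` is Cohen–Macaulay. -/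
theorem isCMQuot_binomialEdgeIdeal_graphG3
    (K : Type*) [Field K] (r s t : ℕ) (hr : 1 ≤ r) (hs : 1 ≤ s) (ht : 1 ≤ t) :
    IsCMQuot (binomialEdgeIdeal K (graphG3 r s t)) := by
  obtain ⟨r, rfl⟩ := Nat.exists_eq_add_of_le' hr
  obtain ⟨s, rfl⟩ := Nat.exists_eq_add_of_le' hs
  obtain ⟨t, rfl⟩ := Nat.exists_eq_add_of_le' ht
  exact (hasParameters_graphG3 K r s t).isCMQuot

end
end
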